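/- arXiv:2603.10550 — 2 statements merged into one kernel-verified Lean document; each statement's English description precedes it below -/
import Mathlib

section
/- Let N ≥ 2 and let Ω ⊂ ℝ^N be a bounded Lipschitz domain. Then the Γ-liminf inequality holds: for every u ∈ L²₀(Ω), every increasing sequence {s_k} ⊂ (0,1) with s_k → 1⁻, and every sequence {u_k} ⊂ L²₀(Ω) with ‖u_k − u‖_{L²(Ω)} → 0, one has F₁(u) ≤ liminf_{k→∞} F_{s_k}(u_k). -/
open MeasureTheory Filter Topology Bornology Set
open scoped ENNReal NNReal

noncomputable section

namespace FracNeumann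

abbrev Euc (N : ℕ) : Type := EuclideanSpace ℝ (Fin N)

/-- The kernel weight `|x - y| ^ (N + 2s)`. -/
def kern (N : ℕ) (s : ℝ) (x y : Euc N) : ℝ := ‖x - y‖ ^ ((N : ℝ) + 2 * s)

/-- The region `ℝ^{2N} \ (Ω^c × Ω^c)`, where `Ω^c := ℝ^N \ closure Ω`. -/
def reg (N : ℕ) (Ω : Set (Euc N)) : Set (Euc N × Euc N) :=
  {q | q.1 ∈ closure Ω ∨ q.2 ∈ closure Ω}

/-- The squared seminorm `[u]_{H^s_{Ω,0}}²`, as an extended real number. -/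
def semiSq (N : ℕ) (s : ℝ) (Ω : Set (Euc N)) (u : Euc N → ℝ) : ℝ≥0∞ :=
  ∫⁻ q in reg N Ω, ENNReal.ofReal ((u q.1 - u q.2) ^ 2 / kern N s q.1 q.2)

/-- `∫_Ω u²`, as an extended real number. -/
def l2sq (N : ℕ) (Ω : Set (Euc N)) (u : Euc N → ℝ) : ℝ≥0∞ :=
  ∫⁻ x in Ω, ENNReal.ofReal ((u x) ^ 2)

/-- Membership in `H^s_{Ω,0}`. -/
def memHs (N : ℕ) (s : ℝ) (Ω : Set (Euc N)) (u : Euc N → ℝ) : Prop :=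
  Measurable u ∧ l2sq N Ω u < ⊤ ∧ semiSq N s Ω u < ⊤

/-- The squared Gagliardo seminorm `[u]_{H^s(Ω)}²`. -/
def semiSqOn (N : ℕ) (s : ℝ) (Ω : Set (Euc N)) (u : Euc N → ℝ) : ℝ≥0∞ :=
  ∫⁻ q in Ω ×ˢ Ω, ENNReal.ofReal ((u q.1 - u q.2) ^ 2 / kern N s q.1 q.2)

/-- Membership in `H^s(Ω)` (for functions defined on all of `ℝ^N`). -/
def memHsOn (N : ℕ) (s : ℝ) (Ω : Set (Euc N)) (u : Euc N → ℝ) : Prop :=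
  Measurable u ∧ l2sq N Ω u < ⊤ ∧ semiSqOn N s Ω u < ⊤

/-- The normalizing constant `c_{N,s}` of the fractional Laplacian. -/
def cNs (N : ℕ) (s : ℝ) : ℝ :=
  (4 : ℝ) ^ s * s * Real.Gamma ((N : ℝ) / 2 + s) /
    (Real.pi ^ ((N : ℝ) / 2) * Real.Gamma (1 - s))

/-- The nonlocal Neumann derivative `𝒩_s u`. -/
def Nneu (N : ℕ) (s : ℝ) (Ω : Set (Euc N)) (u : Euc N → ℝ) (x : Euc N) : ℝ :=
  cNs N s * ∫ y in Ω, (u x - u y) / kern N s x y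

/-- Membership in `H̃^s_{Ω,0}`: members of `H^s_{Ω,0}` with `𝒩_s u = 0` a.e. in `Ω^c`. -/
def memHsTilde (N : ℕ) (s : ℝ) (Ω : Set (Euc N)) (u : Euc N → ℝ) : Prop :=
  memHs N s Ω u ∧ ∀ᵐ x ∂(volume.restrict (closure Ω)ᶜ), Nneu N s Ω u x = 0

/-- The first nontrivial Neumann eigenvalue `μ₁^{(s)}(Ω)`. -/
def mu1 (N : ℕ) (s : ℝ) (Ω : Set (Euc N)) : ℝ :=
  sInf {t : ℝ | ∃ u : Euc N → ℝ, memHs N s Ω u ∧ (∫ x in Ω, (u x) ^ 2) = 1 ∧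
    (∫ x in Ω, u x) = 0 ∧ t = cNs N s / 2 * (semiSq N s Ω u).toReal}

/-- The bilinear form (without the constant). -/
def bform (N : ℕ) (s : ℝ) (Ω : Set (Euc N)) (u v : Euc N → ℝ) : ℝ :=
  ∫ q in reg N Ω, (u q.1 - u q.2) * (v q.1 - v q.2) / kern N s q.1 q.2

/-- First nontrivial eigenfunction: weak solution associated to `μ₁^{(s)}(Ω)`. -/
def IsFirstEigen (N : ℕ) (s : ℝ) (Ω : Set (Euc N)) (u : Euc N → ℝ) : Prop :=
  memHs N s Ω u ∧ ¬ (u =ᵐ[volume.restrict Ω] 0) ∧ (∫ x in Ω, u x) = 0 ∧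
    ∀ v : Euc N → ℝ, memHs N s Ω v →
      cNs N s / 2 * bform N s Ω u v = mu1 N s Ω * ∫ x in Ω, u x * v x

/-- Reflection `σ_e(x) = x - 2(x·e)e` across the hyperplane `{x·e = 0}`. -/
def reflect (N : ℕ) (e x : Euc N) : Euc N := x - (2 * (inner ℝ x e : ℝ)) • e

/-- The polarization `P_e u` with respect to the hyperplane `{x·e = 0}`. -/
def polarize (N : ℕ) (e : Euc N) (u : Euc N → ℝ) (x : Euc N) : ℝ :=
  if 0 ≤ (inner ℝ x e : ℝ) then min (u x) (u (reflect N e x))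
  else max (u x) (u (reflect N e x))

/-- Foliated Schwarz symmetry with respect to `p`. -/
def FoliatedSchwarz (N : ℕ) (p : Euc N) (u : Euc N → ℝ) : Prop :=
  ∃ uh : ℝ → ℝ → ℝ, (∀ r : ℝ, AntitoneOn (uh r) (Icc 0 Real.pi)) ∧
    ∀ x : Euc N, x ≠ 0 → u x = uh ‖x‖ (Real.arccos ((inner ℝ x p : ℝ) / ‖x‖))

/-- Radial symmetry (pointwise). -/
def Radial (N : ℕ) (u : Euc N → ℝ) : Prop := ∃ f : ℝ → ℝ, ∀ x, u x = f ‖x‖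

/-- Radial symmetry (a.e.). -/
def RadialAE (N : ℕ) (u : Euc N → ℝ) : Prop :=
  ∃ f : ℝ → ℝ, ∀ᵐ x : Euc N ∂volume, u x = f ‖x‖

/-- The set `{x ∈ Ω : u x ≠ 0}` has exactly two connected components. -/
def TwoNodal (N : ℕ) (Ω : Set (Euc N)) (u : Euc N → ℝ) : Prop :=
  Nat.card (ConnectedComponents {x : Euc N // x ∈ Ω ∧ u x ≠ 0}) = 2

/-- Bounded Lipschitz domain: open, bounded, connected, and near every boundary point the set
is the region above the graph of a Lipschitz function in some direction `e`. -/
def IsLipschitzDomain (N : ℕ) (Ω : Set (Euc N)) : Prop :=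
  IsOpen Ω ∧ IsBounded Ω ∧ IsConnected Ω ∧
    ∀ x ∈ frontier Ω, ∃ e : Euc N, ‖e‖ = 1 ∧ ∃ r : ℝ, 0 < r ∧
      ∃ (L : NNReal) (f : Euc N → ℝ), LipschitzWith L f ∧
        ∀ y ∈ Metric.ball x r,
          (y ∈ Ω ↔ f (y - ((inner ℝ y e : ℝ)) • e) < (inner ℝ y e : ℝ))

/-- `g` is a weak gradient of `u` in `Ω`, square-integrable on `Ω`. -/
def IsWeakGradient (N : ℕ) (Ω : Set (Euc N)) (u : Euc N → ℝ) (g : Euc N → Euc N) : Prop :=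
  Measurable g ∧ (∫⁻ x in Ω, ENNReal.ofReal (‖g x‖ ^ 2)) < ⊤ ∧
    ∀ φ : Euc N → ℝ, ContDiff ℝ (⊤ : ℕ∞) φ → HasCompactSupport φ → tsupport φ ⊆ Ω →
      ∀ i : Fin N, (∫ x in Ω, u x * fderiv ℝ φ x (EuclideanSpace.single i 1)) =
        - ∫ x in Ω, g x i * φ x

/-- Membership in `H¹(Ω)`. -/
def memH1 (N : ℕ) (Ω : Set (Euc N)) (u : Euc N → ℝ) : Prop :=
  Measurable u ∧ l2sq N Ω u < ⊤ ∧ ∃ g, IsWeakGradient N Ω u g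

/-- `∫_Ω |∇u|²`, as an extended real number. -/
def gradSq (N : ℕ) (Ω : Set (Euc N)) (u : Euc N → ℝ) : ℝ≥0∞ :=
  ⨅ (g : Euc N → Euc N) (_ : IsWeakGradient N Ω u g), ∫⁻ x in Ω, ENNReal.ofReal (‖g x‖ ^ 2)

/-- Rayleigh quotient for the fractional Neumann problem. -/
def rayleighS (N : ℕ) (s : ℝ) (Ω : Set (Euc N)) (u : Euc N → ℝ) : ℝ≥0∞ :=
  ENNReal.ofReal (cNs N s / 2) * semiSq N s Ω u / l2sq N Ω u

/-- Rayleigh quotient for the local Neumann problem. -/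
def rayleigh1 (N : ℕ) (Ω : Set (Euc N)) (u : Euc N → ℝ) : ℝ≥0∞ :=
  gradSq N Ω u / l2sq N Ω u

/-- The min-max value `μ_n^{(s)}(Ω)` over `n`-dimensional subspaces of `H^s_{Ω,0} ∩ L²₀(Ω)`. -/
def muNs (N : ℕ) (s : ℝ) (Ω : Set (Euc N)) (n : ℕ) : ℝ≥0∞ :=
  ⨅ (A : Submodule ℝ (Euc N → ℝ)) (_ : Module.finrank ℝ A = n ∧
      (∀ u ∈ A, memHs N s Ω u ∧ (∫ x in Ω, u x) = 0) ∧
      (∀ u ∈ A, u =ᵐ[(volume : Measure (Euc N))] 0 → u = 0)),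
    ⨆ (u : Euc N → ℝ) (_ : u ∈ A ∧ u ≠ 0), rayleighS N s Ω u

/-- The min-max value over `n`-dimensional subspaces of `H̃^s_{Ω,0} ∩ L²₀(Ω)`. -/
def muNsTilde (N : ℕ) (s : ℝ) (Ω : Set (Euc N)) (n : ℕ) : ℝ≥0∞ :=
  ⨅ (A : Submodule ℝ (Euc N → ℝ)) (_ : Module.finrank ℝ A = n ∧
      (∀ u ∈ A, memHsTilde N s Ω u ∧ (∫ x in Ω, u x) = 0) ∧
      (∀ u ∈ A, u =ᵐ[(volume : Measure (Euc N))] 0 → u = 0)),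
    ⨆ (u : Euc N → ℝ) (_ : u ∈ A ∧ u ≠ 0), rayleighS N s Ω u

/-- The min-max value `μ_n^{(1)}(Ω)` over `n`-dimensional subspaces of `H¹(Ω) ∩ L²₀(Ω)`. -/
def muN1 (N : ℕ) (Ω : Set (Euc N)) (n : ℕ) : ℝ≥0∞ :=
  ⨅ (A : Submodule ℝ (Euc N → ℝ)) (_ : Module.finrank ℝ A = n ∧
      (∀ u ∈ A, memH1 N Ω u ∧ (∫ x in Ω, u x) = 0) ∧
      (∀ u ∈ A, u =ᵐ[volume.restrict Ω] 0 → u = 0)),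
    ⨆ (u : Euc N → ℝ) (_ : u ∈ A ∧ u ≠ 0), rayleigh1 N Ω u

/-- `μ_n^{(s)}(Ω)` including `μ₀^{(s)}(Ω) := 0`. -/
def muNsFull (N : ℕ) (s : ℝ) (Ω : Set (Euc N)) (n : ℕ) : ℝ≥0∞ :=
  if n = 0 then 0 else muNs N s Ω n

/-- `μ_n^{(1)}(Ω)` including `μ₀^{(1)}(Ω) := 0`. -/
def muN1Full (N : ℕ) (Ω : Set (Euc N)) (n : ℕ) : ℝ≥0∞ :=
  if n = 0 then 0 else muN1 N Ω n

/-- The squared `H^s_{Ω,0}`-seminorm of the `s`-minimal extension of `u`: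
the minimal value of `[v]²` over `v ∈ H^s_{Ω,0}` with `v = u` a.e. in `Ω`. -/
def minExtSemiSq (N : ℕ) (s : ℝ) (Ω : Set (Euc N)) (u : Euc N → ℝ) : ℝ≥0∞ :=
  ⨅ (v : Euc N → ℝ) (_ : memHs N s Ω v ∧ v =ᵐ[volume.restrict Ω] u), semiSq N s Ω v

/-- `ω_{N-1}`: volume of the unit ball of `ℝ^{N-1}`. -/
def omegaPrev (N : ℕ) : ℝ := (volume (Metric.ball (0 : Euc (N - 1)) 1)).toReal

/-- Membership in `L²₀(Ω)`. -/
def memL20 (N : ℕ) (Ω : Set (Euc N)) (u : Euc N → ℝ) : Prop :=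
  Measurable u ∧ l2sq N Ω u < ⊤ ∧ (∫ x in Ω, u x) = 0

/-- The functional `F_s` (value `+∞` outside `H^s(Ω)`). -/
def Fs (N : ℕ) (s : ℝ) (Ω : Set (Euc N)) (u : Euc N → ℝ) : ℝ≥0∞ :=
  ENNReal.ofReal (1 - s) * minExtSemiSq N s Ω u

/-- The functional `F₁` (value `+∞` outside `H¹(Ω)`). -/
def F1 (N : ℕ) (Ω : Set (Euc N)) (u : Euc N → ℝ) : ℝ≥0∞ :=
  ENNReal.ofReal (omegaPrev N / (2 * N)) * gradSq N Ω u

end FracNeumann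

/-!
For a test field `φ` and a translation `h`, discrete integration by parts and `2ab - b² ≤ a²` give
`∫ |w(x) - w(x - h)|² dx ≥ 2 ∫ w(x) ⟪φ(x + h) - φ(x), h⟫ dx - ∫ ⟪φ(x), h⟫² dx`.
Integrate this in `h` against the isotropic measure `(1 - s) |h|^{-(N + 2s)} dh` on `|h| < δ`, with
`δ` so small that only interactions inside `Ω` occur. Isotropy turns the right-hand side into
`M₂ / N * (2 ∫ w div φ - ∫ |φ|²)`, with a Taylor error bounded by the third moment `M₃`. As
`s → 1⁻`, `M₂ / N` tends to half the volume of the unit ball and `M₃` to `0`, while `∫ w div φ` is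
continuous under local `L¹` convergence. Finally, the supremum over `φ` of
`2 ∫ u div φ - ∫ |φ|²` controls `∫_Ω |∇u|²` by the Riesz representation theorem.

The resulting constant is `|B_N| / 2`, which dominates `ω_{N-1} / (2N)`.
-/

namespace FracNeumann

open scoped RealInnerProductSpace

section IsometryInvariant

variable {E : Type*} [NormedAddCommGroup E] [InnerProductSpace ℝ E] [MeasurableSpace E]
  [BorelSpace E]

/-- Invariance of a measure under all linear isometries. Quadratic forms have easily computed
integrals against such a measure, which is how the radial fractional kernel is used here. -/
def IsIsometryInvariant (ν : Measure E) : Prop :=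
  ∀ R : E ≃ₗᵢ[ℝ] E, MeasurePreserving R ν ν

variable {ν : Measure E}

lemma integrable_inner_mul_inner (hν : Integrable (fun h => ‖h‖ ^ 2) ν) (v w : E) :
    Integrable (fun h => ⟪v, h⟫ * ⟪w, h⟫) ν := by
  refine (hν.const_mul (‖v‖ * ‖w‖)).mono' (by fun_prop) (.of_forall fun h => ?_)
  calc ‖⟪v, h⟫ * ⟪w, h⟫‖ = ‖⟪v, h⟫‖ * ‖⟪w, h⟫‖ := norm_mul _ _
    _ ≤ (‖v‖ * ‖h‖) * (‖w‖ * ‖h‖) := by gcongr <;> exact norm_inner_le_norm _ _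
    _ = ‖v‖ * ‖w‖ * ‖h‖ ^ 2 := by ring

lemma IsIsometryInvariant.integral_inner_sq_eq_of_norm_eq (hν : IsIsometryInvariant ν) {v w : E}
    (hvw : ‖v‖ = ‖w‖) : ∫ h, ⟪v, h⟫ ^ 2 ∂ν = ∫ h, ⟪w, h⟫ ^ 2 ∂ν := by
  set R := (ℝ ∙ (v - w))ᗮ.reflection
  have hR : R v = w := Submodule.reflection_sub hvw
  rw [← (hν R).integral_comp R.toHomeomorph.measurableEmbedding fun h => ⟪w, h⟫ ^ 2]
  simp only [← hR, LinearIsometryEquiv.inner_map_map]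

variable [FiniteDimensional ℝ E]

lemma integrable_inner_apply_self (h2 : Integrable (fun h => ‖h‖ ^ 2) ν)
    (T : E →L[ℝ] E) : Integrable (fun h => ⟪T h, h⟫) ν := by
  refine (h2.const_mul ‖T‖).mono' (by fun_prop) (.of_forall fun h => ?_)
  calc ‖⟪T h, h⟫‖ ≤ ‖T h‖ * ‖h‖ := norm_inner_le_norm _ _
    _ ≤ ‖T‖ * ‖h‖ * ‖h‖ := by gcongr; exact T.le_opNorm h
    _ = ‖T‖ * ‖h‖ ^ 2 := by ring

lemma IsIsometryInvariant.integral_inner_sq (hν : IsIsometryInvariant ν)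
    (h2 : Integrable (fun h => ‖h‖ ^ 2) ν) (v : E) :
    ∫ h, ⟪v, h⟫ ^ 2 ∂ν = (∫ h, ‖h‖ ^ 2 ∂ν) / Module.finrank ℝ E * ‖v‖ ^ 2 := by
  rcases subsingleton_or_nontrivial E with _ | _
  · simp [Subsingleton.elim v 0]
  let b := stdOrthonormalBasis ℝ E
  have hb : ∀ i, ‖v‖ ^ 2 * ∫ h, ⟪b i, h⟫ ^ 2 ∂ν = ∫ h, ⟪v, h⟫ ^ 2 ∂ν := fun i => by
    rw [hν.integral_inner_sq_eq_of_norm_eq (v := v) (w := ‖v‖ • b i) (by simp [norm_smul]),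
      ← integral_const_mul]
    simp only [real_inner_smul_left, mul_pow]
  have hsum : ‖v‖ ^ 2 * ∫ h, ‖h‖ ^ 2 ∂ν = Module.finrank ℝ E * ∫ h, ⟪v, h⟫ ^ 2 ∂ν :=
    calc ‖v‖ ^ 2 * ∫ h, ‖h‖ ^ 2 ∂ν
        = ‖v‖ ^ 2 * ∑ i, ∫ h, ⟪b i, h⟫ ^ 2 ∂ν := by
          rw [← integral_finsetSum _ fun i _ => by
            simpa only [sq] using integrable_inner_mul_inner h2 (b i) (b i)]
          simp only [b.sum_sq_inner_right]
      _ = Module.finrank ℝ E * ∫ h, ⟪v, h⟫ ^ 2 ∂ν := by simp [Finset.mul_sum, hb]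
  have : (Module.finrank ℝ E : ℝ) ≠ 0 := Nat.cast_ne_zero.2 Module.finrank_pos.ne'
  field_simp
  linarith

lemma IsIsometryInvariant.integral_inner_mul_inner (hν : IsIsometryInvariant ν)
    (h2 : Integrable (fun h => ‖h‖ ^ 2) ν) (v w : E) :
    ∫ h, ⟪v, h⟫ * ⟪w, h⟫ ∂ν = (∫ h, ‖h‖ ^ 2 ∂ν) / Module.finrank ℝ E * ⟪v, w⟫ := by
  have hpol : ∀ h, ⟪v, h⟫ * ⟪w, h⟫ = (⟪v + w, h⟫ ^ 2 - ⟪v - w, h⟫ ^ 2) / 4 := fun h => by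
    rw [inner_add_left, inner_sub_left]
    ring
  have hint : ∀ z : E, Integrable (fun h => ⟪z, h⟫ ^ 2) ν := fun z => by
    simpa only [sq] using integrable_inner_mul_inner h2 z z
  simp only [hpol, integral_div, integral_sub (hint _) (hint _), hν.integral_inner_sq h2,
    norm_add_sq_real, norm_sub_sq_real]
  ring

lemma IsIsometryInvariant.integral_inner_apply_self (hν : IsIsometryInvariant ν)
    (h2 : Integrable (fun h => ‖h‖ ^ 2) ν) (T : E →L[ℝ] E) :
    ∫ h, ⟪T h, h⟫ ∂ν = (∫ h, ‖h‖ ^ 2 ∂ν) / Module.finrank ℝ E * LinearMap.trace ℝ E T := by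
  let b := stdOrthonormalBasis ℝ E
  have hT : ∀ h, ⟪T h, h⟫ = ∑ i, ⟪b i, h⟫ * ⟪T (b i), h⟫ := fun h => by
    nth_rw 1 [← b.sum_repr' h]
    simp only [map_sum, map_smul, sum_inner, real_inner_smul_left]
  simp only [hT]
  rw [integral_finsetSum _ fun i _ => integrable_inner_mul_inner h2 _ _,
    LinearMap.trace_eq_sum_inner _ b, Finset.mul_sum]
  simp only [hν.integral_inner_mul_inner h2, ContinuousLinearMap.coe_coe]

end IsometryInvariant

section Divergence

variable {E : Type*} [NormedAddCommGroup E] [NormedSpace ℝ E]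

/-- The divergence of a vector field, as the coordinate-free trace of its derivative. -/
def divergence (φ : E → E) (x : E) : ℝ := LinearMap.trace ℝ E (fderiv ℝ φ x)

lemma hasCompactSupport_divergence {φ : E → E} (hφ : HasCompactSupport φ) :
    HasCompactSupport (divergence φ) :=
  (hφ.fderiv ℝ).comp_left (g := fun A : E →L[ℝ] E => LinearMap.trace ℝ E A) (map_zero _)

lemma support_divergence_subset (φ : E → E) : Function.support (divergence φ) ⊆ tsupport φ :=
  (Function.support_comp_subset (g := fun A : E →L[ℝ] E => LinearMap.trace ℝ E A)
    (map_zero _) _).trans (support_fderiv_subset ℝ)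

variable [FiniteDimensional ℝ E]

variable (E) in
/-- The trace as a continuous functional on the operators of a finite-dimensional space. -/
def traceCLM : (E →L[ℝ] E) →L[ℝ] ℝ :=
  LinearMap.toContinuousLinearMap (LinearMap.trace ℝ E ∘ₗ ContinuousLinearMap.coeLM ℝ)

lemma traceCLM_apply (A : E →L[ℝ] E) : traceCLM E A = LinearMap.trace ℝ E A := rfl

lemma continuous_divergence {φ : E → E} (hφ : ContDiff ℝ 1 φ) : Continuous (divergence φ) :=
  (traceCLM E).continuous.comp (hφ.continuous_fderiv one_ne_zero)

lemma integral_trace {X : Type*} [MeasurableSpace X] {μ : Measure X} {A : X → E →L[ℝ] E}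
    (hA : Integrable A μ) :
    ∫ x, LinearMap.trace ℝ E (A x) ∂μ = LinearMap.trace ℝ E (∫ x, A x ∂μ : E →L[ℝ] E) :=
  (traceCLM E).integral_comp_comm hA

end Divergence

lemma exists_norm_add_sub_sub_fderiv_le {E F : Type*} [NormedAddCommGroup E] [NormedSpace ℝ E]
    [NormedAddCommGroup F] [NormedSpace ℝ F] {φ : E → F} (hφ : ContDiff ℝ 2 φ)
    (hφc : HasCompactSupport φ) :
    ∃ L : ℝ, ∀ x h, ‖φ (x + h) - φ x - fderiv ℝ φ x h‖ ≤ L * ‖h‖ ^ 2 := by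
  obtain ⟨L, hL⟩ := (hφ.fderiv_right (m := 1) le_rfl).lipschitzWith_of_hasCompactSupport
    (hφc.fderiv ℝ) one_ne_zero
  refine ⟨L, fun x h => ?_⟩
  have hderiv : ∀ y ∈ Metric.closedBall x ‖h‖,
      HasFDerivWithinAt φ (fderiv ℝ φ y) (Metric.closedBall x ‖h‖) y := fun y _ =>
    (hφ.differentiable two_ne_zero y).hasFDerivAt.hasFDerivWithinAt
  have hbound : ∀ y ∈ Metric.closedBall x ‖h‖, ‖fderiv ℝ φ y - fderiv ℝ φ x‖ ≤ L * ‖h‖ :=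
    fun y hy => (hL.norm_sub_le y x).trans (by gcongr; simpa [dist_eq_norm] using hy)
  have hmvt := (convex_closedBall x ‖h‖).norm_image_sub_le_of_norm_hasFDerivWithin_le'
    hderiv hbound (x := x) (y := x + h) (by simp) (by simp)
  simpa [mul_assoc, sq] using hmvt

lemma ofReal_integral_le_lintegral_ofReal {X : Type*} [MeasurableSpace X] {μ : Measure X}
    (f : X → ℝ) : ENNReal.ofReal (∫ x, f x ∂μ) ≤ ∫⁻ x, ENNReal.ofReal (f x) ∂μ := by
  by_cases hf : Integrable f μ
  · rw [integral_eq_lintegral_pos_part_sub_lintegral_neg_part hf]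
    exact (ENNReal.ofReal_le_ofReal (sub_le_self _ ENNReal.toReal_nonneg)).trans
      ENNReal.ofReal_toReal_le
  · simp [integral_undef hf]

lemma integral_inner_apply {E X : Type*} [NormedAddCommGroup E] [InnerProductSpace ℝ E]
    [FiniteDimensional ℝ E] [MeasurableSpace X] {m : Measure X} {A : X → E →L[ℝ] E}
    (hA : Integrable A m) (v w : E) : ∫ x, ⟪A x v, w⟫ ∂m = ⟪(∫ x, A x ∂m) v, w⟫ := by
  rw [ContinuousLinearMap.integral_apply hA, real_inner_comm,
    ← integral_inner (hA.apply_continuousLinearMap v)]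
  simp only [real_inner_comm]

section Duality

variable {E : Type*} [NormedAddCommGroup E] [InnerProductSpace ℝ E] [MeasurableSpace E]
  [BorelSpace E] {μ : Measure E} {w : E → ℝ} {φ : E → E}

section

variable [FiniteDimensional ℝ E]

lemma integrable_smul_fderiv (hw : Integrable w μ) (hφ : ContDiff ℝ 1 φ)
    (hφc : HasCompactSupport φ) : Integrable (fun x => w x • fderiv ℝ φ x) μ := by
  have hcont := hφ.continuous_fderiv one_ne_zero
  obtain ⟨C, hC⟩ := hcont.bounded_above_of_compact_support (hφc.fderiv ℝ)
  exact hw.smul_bdd C hcont.aestronglyMeasurable (.of_forall hC)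

lemma integral_mul_inner_fderiv_le (hw : Integrable w μ) (hφ : ContDiff ℝ 1 φ)
    (hφc : HasCompactSupport φ) {L : ℝ}
    (hL : ∀ x h, ‖φ (x + h) - φ x - fderiv ℝ φ x h‖ ≤ L * ‖h‖ ^ 2) (h : E) :
    ∫ x, w x * ⟪fderiv ℝ φ x h, h⟫ ∂μ
      ≤ ∫ x, w x * ⟪φ (x + h) - φ x, h⟫ ∂μ + ‖h‖ ^ 3 * (L * ∫ x, |w x| ∂μ) := by
  have hpoint : ∀ x, w x * ⟪fderiv ℝ φ x h, h⟫
      ≤ w x * ⟪φ (x + h) - φ x, h⟫ + ‖h‖ ^ 3 * (L * |w x|) := fun x => by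
    have : -(w x * ⟪φ (x + h) - φ x - fderiv ℝ φ x h, h⟫) ≤ |w x| * (L * ‖h‖ ^ 2 * ‖h‖) := by
      refine (neg_le_abs _).trans ?_
      rw [abs_mul]
      gcongr
      exact (abs_real_inner_le_norm _ _).trans (by gcongr; exact hL x h)
    rw [inner_sub_left, mul_sub] at this
    linarith
  have hderiv : Integrable (fun x => w x * ⟪fderiv ℝ φ x h, h⟫) μ := by
    simpa [real_inner_smul_left] using
      ((integrable_smul_fderiv hw hφ hφc).apply_continuousLinearMap h).inner_const (𝕜 := ℝ) h
  have hincr : Integrable (fun x => w x * ⟪φ (x + h) - φ x, h⟫) μ := by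
    obtain ⟨C, hC⟩ := hφ.continuous.bounded_above_of_compact_support hφc
    have hcont : Continuous fun x => ⟪φ (x + h) - φ x, h⟫ := by
      have := hφ.continuous
      fun_prop
    refine hw.mul_bdd (c := (C + C) * ‖h‖) hcont.aestronglyMeasurable (.of_forall fun x => ?_)
    refine (norm_inner_le_norm _ _).trans ?_
    gcongr
    exact (norm_sub_le _ _).trans (add_le_add (hC _) (hC _))
  have hcubic : Integrable (fun x => ‖h‖ ^ 3 * (L * |w x|)) μ := (hw.abs.const_mul L).const_mul _
  simpa only [Pi.add_apply, integral_add hincr hcubic, integral_const_mul] using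
    integral_mono hderiv (hincr.add hcubic) hpoint

end

variable [IsFiniteMeasureOnCompacts μ]

-- Discrete integration by parts followed by `2ab - b² ≤ a²`.
lemma ofReal_integral_translate_le [μ.IsAddLeftInvariant] (hw : Integrable w μ)
    (hφ : Continuous φ) (hφc : HasCompactSupport φ) (h : E) :
    ENNReal.ofReal (2 * ∫ x, w x * ⟪φ (x + h) - φ x, h⟫ ∂μ - ∫ x, ⟪φ x, h⟫ ^ 2 ∂μ)
      ≤ ∫⁻ x in Function.support φ, ENNReal.ofReal ((w x - w (x - h)) ^ 2) ∂μ := by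
  set p : E → ℝ := fun x => ⟪φ x, h⟫
  have hp : Continuous p := by fun_prop
  have hpc : HasCompactSupport p := hφc.comp_left (g := fun v => ⟪v, h⟫) (inner_zero_left h)
  obtain ⟨C, hC⟩ := hp.bounded_above_of_compact_support hpc
  have hwp : Integrable (fun x => w x * p x) μ :=
    hw.mul_bdd hp.aestronglyMeasurable (.of_forall hC)
  have hwp_add : Integrable (fun x => w x * p (x + h)) μ :=
    hw.mul_bdd (hp.comp (continuous_add_const h)).aestronglyMeasurable
      (.of_forall fun x => hC (x + h))
  have hwp_sub : Integrable (fun x => w (x - h) * p x) μ := by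
    simpa using hwp_add.comp_sub_right h
  have hp2 : Integrable (fun x => p x ^ 2) μ := by
    simpa only [sq] using (hp.integrable_of_hasCompactSupport hpc).mul_bdd
      hp.aestronglyMeasurable (.of_forall hC)
  have hparts : ∫ x, w x * ⟪φ (x + h) - φ x, h⟫ ∂μ = ∫ x, (w (x - h) - w x) * p x ∂μ := by
    simp only [inner_sub_left, mul_sub, sub_mul]
    rw [integral_sub hwp_add hwp, integral_sub hwp_sub hwp,
      ← integral_sub_right_eq_self (fun x => w x * p (x + h)) h]
    simp only [sub_add_cancel]
  have hint : Integrable (fun x => 2 * ((w (x - h) - w x) * p x)) μ := by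
    simpa only [sub_mul, Pi.sub_apply] using (hwp_sub.sub hwp).const_mul 2
  rw [hparts, ← integral_const_mul, ← integral_sub hint hp2]
  refine (ofReal_integral_le_lintegral_ofReal _).trans ?_
  rw [← lintegral_indicator hφ.isOpen_support.measurableSet]
  refine lintegral_mono fun x => ?_
  by_cases hx : φ x = 0
  · simp [p, hx]
  · rw [indicator_of_mem (by exact hx)]
    exact ENNReal.ofReal_le_ofReal (by linarith [sq_nonneg (w (x - h) - w x - p x)])

lemma integrable_rankOne_self (hφ : Continuous φ) (hφc : HasCompactSupport φ) :
    Integrable (fun x => InnerProductSpace.rankOne ℝ (φ x) (φ x)) μ :=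
  Continuous.integrable_of_hasCompactSupport
    (((InnerProductSpace.rankOne ℝ).continuous.comp hφ).clm_apply hφ)
    (hφc.comp_left (g := fun v => InnerProductSpace.rankOne ℝ v v) (by simp))

variable [FiniteDimensional ℝ E]

-- Integrating in `h`, the quadratic part averages to a trace, and only the Taylor remainder,
-- controlled by the third moment of `ν`, is lost.
lemma IsIsometryInvariant.ofReal_le_lintegral_translate [μ.IsAddLeftInvariant] {ν : Measure E}
    (hν : IsIsometryInvariant ν) (h2 : Integrable (fun h => ‖h‖ ^ 2) ν)
    (h3 : Integrable (fun h => ‖h‖ ^ 3) ν) (hw : Integrable w μ) (hφ : ContDiff ℝ 1 φ)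
    (hφc : HasCompactSupport φ) {L : ℝ}
    (hL : ∀ x h, ‖φ (x + h) - φ x - fderiv ℝ φ x h‖ ≤ L * ‖h‖ ^ 2) :
    ENNReal.ofReal ((∫ h, ‖h‖ ^ 2 ∂ν) / Module.finrank ℝ E *
        (2 * ∫ x, w x * divergence φ x ∂μ - ∫ x, ‖φ x‖ ^ 2 ∂μ)
          - (∫ h, ‖h‖ ^ 3 ∂ν) * (2 * L * ∫ x, |w x| ∂μ))
      ≤ ∫⁻ h, ∫⁻ x in Function.support φ, ENNReal.ofReal ((w x - w (x - h)) ^ 2) ∂μ ∂ν := by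
  have hD := integrable_smul_fderiv hw hφ hφc
  have hR := integrable_rankOne_self (μ := μ) hφ.continuous hφc
  set D : E →L[ℝ] E := ∫ x, w x • fderiv ℝ φ x ∂μ
  set R : E →L[ℝ] E := ∫ x, InnerProductSpace.rankOne ℝ (φ x) (φ x) ∂μ
  have htrace : LinearMap.trace ℝ E ((2 : ℝ) • D - R : E →L[ℝ] E)
      = 2 * ∫ x, w x * divergence φ x ∂μ - ∫ x, ‖φ x‖ ^ 2 ∂μ := by
    rw [ContinuousLinearMap.toLinearMap_sub, ContinuousLinearMap.toLinearMap_smul, map_sub,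
      map_smul, ← integral_trace hD, ← integral_trace hR]
    simp [divergence, InnerProductSpace.trace_rankOne]
  have hlower : ∀ h, ⟪((2 : ℝ) • D - R) h, h⟫ - ‖h‖ ^ 3 * (2 * L * ∫ x, |w x| ∂μ)
      ≤ 2 * ∫ x, w x * ⟪φ (x + h) - φ x, h⟫ ∂μ - ∫ x, ⟪φ x, h⟫ ^ 2 ∂μ := fun h => by
    have hDh : ⟪D h, h⟫ = ∫ x, w x * ⟪fderiv ℝ φ x h, h⟫ ∂μ := by
      simp [D, ← integral_inner_apply hD, real_inner_smul_left]
    have hRh : ⟪R h, h⟫ = ∫ x, ⟪φ x, h⟫ ^ 2 ∂μ := by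
      simp [R, ← integral_inner_apply hR, real_inner_smul_left, sq]
    have := integral_mul_inner_fderiv_le hw hφ hφc hL h
    rw [sub_apply, smul_apply, inner_sub_left, real_inner_smul_left, hDh, hRh]
    linarith
  rw [← htrace, ← hν.integral_inner_apply_self h2, ← integral_mul_const,
    ← integral_sub (integrable_inner_apply_self h2 _) (h3.mul_const _)]
  exact (ofReal_integral_le_lintegral_ofReal _).trans <| lintegral_mono fun h =>
    (ENNReal.ofReal_le_ofReal (hlower h)).trans
      (ofReal_integral_translate_le hw hφ.continuous hφc h)

end Duality

section FractionalKernel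

/-- The radial density `(1 - s) r^{-(n + 2s)}`, cut off at `δ`. The truncation makes the moments
of order greater than `2s` finite, and the factor `1 - s` makes the second one converge to a
positive limit as `s → 1⁻`. -/
def fracProfile (n : ℕ) (s δ : ℝ) : ℝ → ℝ :=
  (Iio δ).indicator fun r => (1 - s) * r ^ (-(n + 2 * s) : ℝ)

variable {n : ℕ} {s δ : ℝ}

lemma measurable_fracProfile : Measurable (fracProfile n s δ) :=
  Measurable.indicator (by fun_prop) measurableSet_Iio

lemma measurable_ofReal_fracProfile_norm {E : Type*} [NormedAddCommGroup E] [MeasurableSpace E]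
    [OpensMeasurableSpace E] : Measurable fun h : E => ENNReal.ofReal (fracProfile n s δ ‖h‖) :=
  ENNReal.measurable_ofReal.comp (measurable_fracProfile.comp measurable_norm)

lemma eqOn_pow_smul_fracProfile_smul_pow (hn : 0 < n) (hs : s ≤ 1) (m : ℕ) :
    EqOn (fun r => r ^ (n - 1) • (ENNReal.ofReal (fracProfile n s δ r)).toReal • r ^ m)
      ((Ioo 0 δ).indicator fun r => (1 - s) * r ^ (m - 1 - 2 * s)) (Ioi 0) := by
  intro r (hr : 0 < r)
  by_cases hrδ : r < δ
  · have hpow : r ^ (m - 1 - 2 * s) = r ^ (n - 1) * (r ^ (-(n + 2 * s) : ℝ) * r ^ m) := by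
      simp only [← Real.rpow_natCast, Nat.cast_pred hn, ← Real.rpow_add hr]
      ring_nf
    simp only [smul_eq_mul]
    rw [fracProfile, indicator_of_mem (show r ∈ Iio δ from hrδ),
      indicator_of_mem (show r ∈ Ioo 0 δ from ⟨hr, hrδ⟩),
      ENNReal.toReal_ofReal (mul_nonneg (sub_nonneg.2 hs) (Real.rpow_nonneg hr.le _)), hpow]
    ring
  · simp [fracProfile, hrδ]

variable {E : Type*} [NormedAddCommGroup E] [InnerProductSpace ℝ E] [FiniteDimensional ℝ E]
  [MeasurableSpace E] [BorelSpace E]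

variable (E) in
/-- The measure `(1 - s) |h|^{-(n + 2s)} dh` on the ball of radius `δ` of an `n`-dimensional
space. -/
def fracKernel (s δ : ℝ) : Measure E :=
  volume.withDensity fun h => ENNReal.ofReal (fracProfile (Module.finrank ℝ E) s δ ‖h‖)

lemma isIsometryInvariant_withDensity_comp_norm (g : ℝ → ℝ≥0∞) :
    IsIsometryInvariant ((volume : Measure E).withDensity fun h => g ‖h‖) := fun R => by
  refine ⟨R.continuous.measurable, Measure.ext fun A hA => ?_⟩
  rw [Measure.map_apply R.continuous.measurable hA, withDensity_apply _ hA,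
    withDensity_apply _ (R.continuous.measurable hA),
    ← R.measurePreserving.setLIntegral_comp_preimage_emb R.toHomeomorph.measurableEmbedding
      (fun h => g ‖h‖) A]
  simp only [R.norm_map]

lemma isIsometryInvariant_fracKernel : IsIsometryInvariant (fracKernel E s δ) :=
  isIsometryInvariant_withDensity_comp_norm fun r =>
    ENNReal.ofReal (fracProfile (Module.finrank ℝ E) s δ r)

lemma lintegral_fracKernel_le (f : E → ℝ≥0∞) :
    ∫⁻ h, f h ∂fracKernel E s δ ≤
      ∫⁻ h, ENNReal.ofReal (fracProfile (Module.finrank ℝ E) s δ ‖h‖) * f h :=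
  lintegral_withDensity_le_lintegral_mul _ measurable_ofReal_fracProfile_norm f

variable [Nontrivial E]

lemma integrable_norm_pow_fracKernel (hδ : 0 < δ) (hs : s ≤ 1) {m : ℕ} (hm : 2 * s < m) :
    Integrable (fun h => ‖h‖ ^ m) (fracKernel E s δ) := by
  have hpow : IntegrableOn (fun r => (1 - s) * r ^ (m - 1 - 2 * s)) (Ioo 0 δ) :=
    ((intervalIntegral.integrableOn_Ioo_rpow_iff hδ).2 (by linarith)).const_mul _
  rw [fracKernel, integrable_withDensity_iff_integrable_smul' measurable_ofReal_fracProfile_norm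
    (.of_forall fun _ => ENNReal.ofReal_lt_top), integrable_fun_norm_addHaar volume (f := fun r =>
      (ENNReal.ofReal (fracProfile (Module.finrank ℝ E) s δ r)).toReal • r ^ m),
    integrableOn_congr_fun (eqOn_pow_smul_fracProfile_smul_pow Module.finrank_pos hs m)
      measurableSet_Ioi]
  exact (hpow.integrable_indicator measurableSet_Ioo).integrableOn

lemma integral_norm_pow_fracKernel (hδ : 0 < δ) (hs : s ≤ 1) {m : ℕ} (hm : 2 * s < m) :
    ∫ h, ‖h‖ ^ m ∂fracKernel E s δ = Module.finrank ℝ E * volume.real (Metric.ball (0 : E) 1) *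
      ((1 - s) * (δ ^ (m - 2 * s) / (m - 2 * s))) := by
  rw [fracKernel, integral_withDensity_eq_integral_toReal_smul measurable_ofReal_fracProfile_norm
    (.of_forall fun _ => ENNReal.ofReal_lt_top), integral_fun_norm_addHaar volume (f := fun r =>
      (ENNReal.ofReal (fracProfile (Module.finrank ℝ E) s δ r)).toReal • r ^ m),
    setIntegral_congr_fun measurableSet_Ioi
      (eqOn_pow_smul_fracProfile_smul_pow Module.finrank_pos hs m),
    setIntegral_indicator measurableSet_Ioo, inter_eq_right.2 Ioo_subset_Ioi_self,
    ← integral_Ioc_eq_integral_Ioo, ← intervalIntegral.integral_of_le hδ.le,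
    intervalIntegral.integral_const_mul, integral_rpow (.inl (by linarith)), Real.zero_rpow
      (by linarith), nsmul_eq_mul, smul_eq_mul]
  ring_nf

end FractionalKernel

section GagliardoEnergy

variable {s : ℝ}

lemma fracProfile_mul_sq {n : ℕ} {δ r : ℝ} (hr : 0 ≤ r) (hrδ : r < δ) (a : ℝ) :
    fracProfile n s δ r * a ^ 2 = (1 - s) * (a ^ 2 / r ^ (n + 2 * s : ℝ)) := by
  rw [fracProfile, indicator_of_mem (mem_Iio.2 hrδ), Real.rpow_neg hr]
  ring

lemma lintegral_fracKernel_translate_le {E : Type*} [NormedAddCommGroup E] [InnerProductSpace ℝ E]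
    [FiniteDimensional ℝ E] [MeasurableSpace E] [BorelSpace E] (hs : s ≤ 1) {Ω S : Set E}
    (hΩ : MeasurableSet Ω) (hS : MeasurableSet S) {δ : ℝ} (hSΩ : Metric.thickening δ S ⊆ Ω)
    {v w : E → ℝ} (hv : Measurable v) (hw : EqOn w v (Metric.thickening δ S)) :
    ∫⁻ h, ∫⁻ x in S, ENNReal.ofReal ((w x - w (x - h)) ^ 2) ∂volume ∂fracKernel E s δ ≤
      ENNReal.ofReal (1 - s) * ∫⁻ q in Ω ×ˢ Ω, ENNReal.ofReal
        ((v q.1 - v q.2) ^ 2 / ‖q.1 - q.2‖ ^ (Module.finrank ℝ E + 2 * s : ℝ)) := by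
  set G : E × E → ℝ≥0∞ := (Ω ×ˢ Ω).indicator fun q =>
    ENNReal.ofReal ((v q.1 - v q.2) ^ 2 / ‖q.1 - q.2‖ ^ (Module.finrank ℝ E + 2 * s : ℝ)) with hG
  have hGm : Measurable G := Measurable.indicator (by fun_prop) (hΩ.prod hΩ)
  have hpt : ∀ h, ∀ x ∈ S, ENNReal.ofReal (fracProfile (Module.finrank ℝ E) s δ ‖h‖) *
      ENNReal.ofReal ((w x - w (x - h)) ^ 2) ≤ ENNReal.ofReal (1 - s) * G (x, x - h) := by
    intro h x hx
    by_cases hh : ‖h‖ < δ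
    · have hxδ := Metric.self_subset_thickening ((norm_nonneg h).trans_lt hh) S hx
      have hyδ : x - h ∈ Metric.thickening δ S :=
        Metric.mem_thickening_iff.2 ⟨x, hx, by simpa [dist_eq_norm] using hh⟩
      rw [hG, indicator_of_mem (show (x, x - h) ∈ Ω ×ˢ Ω from ⟨hSΩ hxδ, hSΩ hyδ⟩), hw hxδ,
        hw hyδ, ← ENNReal.ofReal_mul (sub_nonneg.2 hs), ← ENNReal.ofReal_mul' (sq_nonneg _),
        fracProfile_mul_sq (norm_nonneg h) hh, sub_sub_cancel]
    · simp [fracProfile, hh]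
  calc ∫⁻ h, ∫⁻ x in S, ENNReal.ofReal ((w x - w (x - h)) ^ 2) ∂volume ∂fracKernel E s δ
      ≤ ∫⁻ h, ENNReal.ofReal (fracProfile (Module.finrank ℝ E) s δ ‖h‖) *
          ∫⁻ x in S, ENNReal.ofReal ((w x - w (x - h)) ^ 2) :=
        lintegral_fracKernel_le _
    _ ≤ ∫⁻ h, ∫⁻ x, ENNReal.ofReal (1 - s) * G (x, x - h) := by
        refine lintegral_mono fun h => ?_
        rw [← lintegral_const_mul' _ _ ENNReal.ofReal_ne_top]
        exact (setLIntegral_mono' hS (hpt h)).trans (setLIntegral_le_lintegral _ _)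
    _ = ∫⁻ x, ∫⁻ h, ENNReal.ofReal (1 - s) * G (x, x - h) :=
        lintegral_lintegral_swap (by fun_prop)
    _ = ∫⁻ x, ∫⁻ y, ENNReal.ofReal (1 - s) * G (x, y) := lintegral_congr fun x =>
        lintegral_sub_left_eq_self (fun y => ENNReal.ofReal (1 - s) * G (x, y)) x
    _ = ENNReal.ofReal (1 - s) * ∫⁻ q in Ω ×ˢ Ω, ENNReal.ofReal
          ((v q.1 - v q.2) ^ 2 / ‖q.1 - q.2‖ ^ (Module.finrank ℝ E + 2 * s : ℝ)) := by
        rw [← lintegral_indicator (hΩ.prod hΩ), Measure.volume_eq_prod,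
          ← lintegral_const_mul _ hGm, lintegral_prod _ (by fun_prop)]

variable {N : ℕ} {Ω : Set (Euc N)} {u v : Euc N → ℝ}

lemma semiSqOn_eq_lintegral_finrank : semiSqOn N s Ω u = ∫⁻ q in Ω ×ˢ Ω, ENNReal.ofReal
    ((u q.1 - u q.2) ^ 2 / ‖q.1 - q.2‖ ^ (Module.finrank ℝ (Euc N) + 2 * s : ℝ)) := by
  rw [finrank_euclideanSpace_fin]
  rfl

lemma semiSqOn_congr_ae (h : v =ᵐ[volume.restrict Ω] u) : semiSqOn N s Ω v = semiSqOn N s Ω u := by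
  rw [semiSqOn, semiSqOn, Measure.volume_eq_prod, ← Measure.prod_restrict]
  refine lintegral_congr_ae ?_
  filter_upwards [Measure.quasiMeasurePreserving_fst.ae_eq_comp h,
    Measure.quasiMeasurePreserving_snd.ae_eq_comp h] with q h₁ h₂
  simp only [Function.comp_apply] at h₁ h₂
  rw [h₁, h₂]

lemma semiSqOn_le_semiSq : semiSqOn N s Ω v ≤ semiSq N s Ω v :=
  lintegral_mono_set fun _ hq => .inl (subset_closure hq.1)

lemma semiSqOn_le_minExtSemiSq : semiSqOn N s Ω u ≤ minExtSemiSq N s Ω u :=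
  le_iInf₂ fun _ hv => (semiSqOn_congr_ae hv.2).symm.le.trans semiSqOn_le_semiSq

end GagliardoEnergy

section Riesz

variable {V H : Type*} [AddCommGroup V] [Module ℝ V] [NormedAddCommGroup H]
  [InnerProductSpace ℝ H] {ι : V →ₗ[ℝ] H} {ℓ : V →ₗ[ℝ] ℝ} {C : ℝ}

lemma abs_le_sqrt_mul_norm_of_two_mul_le (h : ∀ v, 2 * ℓ v ≤ C + ‖ι v‖ ^ 2) (v : V) :
    |ℓ v| ≤ √C * ‖ι v‖ := by
  have hC : 0 ≤ C := by simpa using h 0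
  have hquad : ∀ t : ℝ, 0 ≤ ‖ι v‖ ^ 2 * (t * t) + -(2 * ℓ v) * t + C := fun t => by
    have := h (t • v)
    rw [map_smul, map_smul, norm_smul, mul_pow, smul_eq_mul, Real.norm_eq_abs, sq_abs] at this
    linarith
  have hdiscrim := discrim_le_zero hquad
  rw [discrim] at hdiscrim
  rw [← Real.sqrt_sq (norm_nonneg (ι v)), ← Real.sqrt_mul hC]
  exact Real.abs_le_sqrt (by linarith)

lemma exists_inner_eq_of_abs_le [CompleteSpace H] (hC : 0 ≤ C) (h : ∀ v, |ℓ v| ≤ C * ‖ι v‖) :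
    ∃ g : H, ‖g‖ ≤ C ∧ ∀ v, ℓ v = ⟪g, ι v⟫ := by
  obtain ⟨f, hf⟩ : ∃ f : H →ₗ[ℝ] ℝ, f ∘ₗ ι = ℓ := by
    have hker : ℓ ∈ (LinearMap.ker ι).dualAnnihilator :=
      (Submodule.mem_dualAnnihilator _).2 fun v hv => by
        simpa [LinearMap.mem_ker.1 hv] using h v
    rwa [← LinearMap.range_dualMap_eq_dualAnnihilator_ker] at hker
  let f₀ : LinearMap.range ι →L[ℝ] ℝ := (f.domRestrict _).mkContinuous C fun ⟨_, v, hv⟩ => by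
    simpa [← hv, ← hf] using h v
  obtain ⟨F, hF, hFn⟩ := exists_extension_norm_eq (LinearMap.range ι) f₀
  refine ⟨(InnerProductSpace.toDual ℝ H).symm F, ?_, fun v => ?_⟩
  · rw [LinearIsometryEquiv.norm_map, hFn]
    exact LinearMap.mkContinuous_norm_le _ hC _
  · rw [InnerProductSpace.toDual_symm_apply, ← hf]
    exact (hF ⟨ι v, LinearMap.mem_range_self ι v⟩).symm

end Riesz

section WeakGradient

open scoped Distributions
open TopologicalSpace (Opens)

variable {E : Type*} [NormedAddCommGroup E] [InnerProductSpace ℝ E] [MeasurableSpace E]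
  [BorelSpace E] {Ω : Opens E}

/-- Test fields as elements of `L²`. -/
def testFunctionToL2 (Ω : Opens E) (μ : Measure E) [IsFiniteMeasureOnCompacts μ] :
    𝓓(Ω, E) →ₗ[ℝ] Lp E 2 μ where
  toFun φ := (φ.continuous.memLp_of_hasCompactSupport φ.hasCompactSupport).toLp _
  map_add' _ _ := rfl
  map_smul' _ _ := rfl

variable {μ : Measure E}

lemma coeFn_testFunctionToL2 [IsFiniteMeasureOnCompacts μ] (φ : 𝓓(Ω, E)) :
    testFunctionToL2 Ω μ φ =ᵐ[μ] φ :=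
  (φ.continuous.memLp_of_hasCompactSupport φ.hasCompactSupport).coeFn_toLp

lemma norm_testFunctionToL2_sq [IsFiniteMeasureOnCompacts μ] (φ : 𝓓(Ω, E)) :
    ‖testFunctionToL2 Ω μ φ‖ ^ 2 = ∫ x, ‖φ x‖ ^ 2 ∂μ := by
  rw [← real_inner_self_eq_norm_sq, L2.inner_def]
  refine integral_congr_ae ?_
  filter_upwards [coeFn_testFunctionToL2 φ] with x hx
  rw [hx, real_inner_self_eq_norm_sq]

variable [FiniteDimensional ℝ E]

/-- The functional `φ ↦ ∫ u div φ`, that is, minus the distributional gradient of `u`. -/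
def divergencePairing (Ω : Opens E) (u : E → ℝ) (μ : Measure E) : 𝓓(Ω, E) →L[ℝ] ℝ :=
  TestFunction.integralAgainstBilinCLM (ContinuousLinearMap.mul ℝ ℝ).flip μ u ∘L
    TestFunction.postcompCLM (traceCLM E) ∘L TestFunction.fderivCLM ℝ ⊤ ⊤

variable {u : E → ℝ}

lemma divergencePairing_apply (hu : LocallyIntegrableOn u Ω μ) (φ : 𝓓(Ω, E)) :
    divergencePairing Ω u μ φ = ∫ x, u x * divergence φ x ∂μ := by
  simp [divergencePairing, hu, divergence, traceCLM_apply, mul_comm]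

lemma exists_Lp_integral_mul_divergence_eq [IsFiniteMeasureOnCompacts μ]
    (hu : LocallyIntegrableOn u Ω μ) {C : ℝ}
    (h : ∀ φ : 𝓓(Ω, E), 2 * ∫ x, u x * divergence φ x ∂μ - ∫ x, ‖φ x‖ ^ 2 ∂μ ≤ C) :
    ∃ g : Lp E 2 μ, ‖g‖ ^ 2 ≤ C ∧
      ∀ φ : 𝓓(Ω, E), ∫ x, u x * divergence φ x ∂μ = ∫ x, ⟪g x, φ x⟫ ∂μ := by
  have hquad : ∀ φ : 𝓓(Ω, E), 2 * (divergencePairing Ω u μ : 𝓓(Ω, E) →ₗ[ℝ] ℝ) φ ≤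
      C + ‖testFunctionToL2 Ω μ φ‖ ^ 2 := fun φ => by
    simpa [divergencePairing_apply hu, norm_testFunctionToL2_sq, add_comm] using h φ
  have hC : 0 ≤ C := by simpa using hquad 0
  obtain ⟨g, hg, hgφ⟩ :=
    exists_inner_eq_of_abs_le (Real.sqrt_nonneg C) (abs_le_sqrt_mul_norm_of_two_mul_le hquad)
  refine ⟨g, (Real.le_sqrt (norm_nonneg _) hC).1 hg, fun φ => ?_⟩
  rw [← divergencePairing_apply hu]
  refine (hgφ φ).trans ?_
  rw [L2.inner_def]
  refine integral_congr_ae ?_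
  filter_upwards [coeFn_testFunctionToL2 φ] with x hx
  rw [hx]

end WeakGradient

section GradSq

open scoped Distributions
open TopologicalSpace (Opens)

variable {N : ℕ} {Ω : Opens (Euc N)} {u : Euc N → ℝ}

lemma divergence_smul_const {E : Type*} [NormedAddCommGroup E] [NormedSpace ℝ E]
    [FiniteDimensional ℝ E] {ψ : E → ℝ} {x : E} (hψ : DifferentiableAt ℝ ψ x) (v : E) :
    divergence (fun x => ψ x • v) x = fderiv ℝ ψ x v := by
  rw [divergence, (hψ.hasFDerivAt.smul_const v).fderiv]
  exact LinearMap.trace_smulRight _ v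

lemma lintegral_ofReal_norm_sq_eq {X F : Type*} [MeasurableSpace X] {μ : Measure X}
    [NormedAddCommGroup F] [InnerProductSpace ℝ F] (g : Lp F 2 μ) :
    ∫⁻ x, ENNReal.ofReal (‖g x‖ ^ 2) ∂μ = ENNReal.ofReal (‖g‖ ^ 2) := by
  simp only [← real_inner_self_eq_norm_sq, L2.inner_def]
  exact (ofReal_integral_eq_lintegral_ofReal (L2.integrable_inner (𝕜 := ℝ) g g)
    (.of_forall fun x => real_inner_self_nonneg)).symm

lemma isWeakGradient_neg_of_integral_mul_divergence_eq (g : Lp (Euc N) 2 (volume : Measure (Euc N)))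
    (hg : ∀ φ : 𝓓(Ω, Euc N), ∫ x, u x * divergence φ x = ∫ x, ⟪g x, φ x⟫) :
    IsWeakGradient N Ω u fun x => -g x := by
  refine ⟨(Lp.stronglyMeasurable g).measurable.neg, ?_, fun ψ hψ hψc hψs i => ?_⟩
  · simp only [norm_neg]
    exact (setLIntegral_le_lintegral _ _).trans_lt
      (lintegral_ofReal_norm_sq_eq g ▸ ENNReal.ofReal_lt_top)
  let φ : 𝓓(Ω, Euc N) := ⟨fun x => ψ x • EuclideanSpace.single i 1, hψ.smul contDiff_const,
    hψc.smul_right, (tsupport_smul_subset_left ψ _).trans hψs⟩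
  have hψ0 : ∀ x ∉ (Ω : Set (Euc N)), x ∉ tsupport ψ := fun x hx h => hx (hψs h)
  rw [setIntegral_eq_integral_of_forall_compl_eq_zero fun x hx => by
      simp [fderiv_of_notMem_tsupport (𝕜 := ℝ) (hψ0 x hx)],
    setIntegral_eq_integral_of_forall_compl_eq_zero fun x hx => by
      simp [image_eq_zero_of_notMem_tsupport (hψ0 x hx)], ← integral_neg]
  convert hg φ using 2 with x
  · ext x
    congr 1
    exact (divergence_smul_const (hψ.differentiable (by simp) x) _).symm
  · ext x
    simp [φ, real_inner_smul_right, EuclideanSpace.inner_single_right, mul_comm]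

lemma gradSq_le_of_forall_testFunction (hu : LocallyIntegrableOn u Ω) {C : ℝ≥0∞}
    (h : ∀ φ : 𝓓(Ω, Euc N),
      ENNReal.ofReal (2 * (∫ x, u x * divergence φ x) - ∫ x, ‖φ x‖ ^ 2) ≤ C) :
    gradSq N Ω u ≤ C := by
  obtain rfl | hC := eq_or_ne C ⊤
  · exact le_top
  obtain ⟨g, hg, hgφ⟩ := exists_Lp_integral_mul_divergence_eq hu fun φ =>
    (ENNReal.ofReal_le_iff_le_toReal hC).1 (h φ)
  refine (iInf₂_le _ (isWeakGradient_neg_of_integral_mul_divergence_eq g hgφ)).trans ?_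
  simp only [norm_neg]
  calc ∫⁻ x in Ω, ENNReal.ofReal (‖g x‖ ^ 2) ≤ ∫⁻ x, ENNReal.ofReal (‖g x‖ ^ 2) :=
        setLIntegral_le_lintegral _ _
    _ = ENNReal.ofReal (‖g‖ ^ 2) := lintegral_ofReal_norm_sq_eq g
    _ ≤ C := ENNReal.ofReal_le_of_le_toReal hg

end GradSq

section FracKernelAsymptotics

variable {E : Type*} [NormedAddCommGroup E] [InnerProductSpace ℝ E] [FiniteDimensional ℝ E]
  [MeasurableSpace E] [BorelSpace E] [Nontrivial E] {δ : ℝ}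

lemma tendsto_integral_norm_sq_fracKernel (hδ : 0 < δ) :
    Tendsto (fun s => (∫ h, ‖h‖ ^ 2 ∂fracKernel E s δ) / Module.finrank ℝ E) (𝓝[<] 1)
      (𝓝 (volume.real (Metric.ball (0 : E) 1) / 2)) := by
  have hcont : Continuous fun s : ℝ => volume.real (Metric.ball (0 : E) 1) / 2 * δ ^ (2 - 2 * s) :=
    continuous_const.mul <| continuous_const.rpow (by fun_prop) fun _ => .inl hδ.ne'
  have hlim := (hcont.tendsto 1).mono_left (nhdsWithin_le_nhds (s := Iio 1))
  simp only [mul_one, sub_self, Real.rpow_zero] at hlim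
  refine hlim.congr' ?_
  filter_upwards [self_mem_nhdsWithin] with s (hs : s < 1)
  rw [integral_norm_pow_fracKernel hδ hs.le (by norm_num; linarith)]
  have hE : (Module.finrank ℝ E : ℝ) ≠ 0 := Nat.cast_ne_zero.2 Module.finrank_pos.ne'
  have hs' : 1 - s ≠ 0 := (sub_pos.2 hs).ne'
  push_cast
  rw [show 2 - 2 * s = 2 * (1 - s) by ring]
  field_simp

lemma tendsto_integral_norm_pow_fracKernel (hδ : 0 < δ) {m : ℕ} (hm : 2 < m) :
    Tendsto (fun s => ∫ h, ‖h‖ ^ m ∂fracKernel E s δ) (𝓝[<] 1) (𝓝 0) := by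
  have hm' : (2 : ℝ) < m := by exact_mod_cast hm
  have hcont : ContinuousAt (fun s : ℝ => Module.finrank ℝ E *
      volume.real (Metric.ball (0 : E) 1) * ((1 - s) * (δ ^ (m - 2 * s) / (m - 2 * s)))) 1 :=
    continuousAt_const.mul <| ContinuousAt.mul (by fun_prop) <|
      ContinuousAt.div (continuousAt_const.rpow (by fun_prop) (.inl hδ.ne')) (by fun_prop)
        (by linarith)
  have hlim := hcont.tendsto.mono_left (nhdsWithin_le_nhds (s := Iio 1))
  simp only [sub_self, zero_mul, mul_zero] at hlim
  refine hlim.congr' ?_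
  filter_upwards [self_mem_nhdsWithin] with s (hs : s < 1)
  rw [integral_norm_pow_fracKernel hδ hs.le (by linarith)]

end FracKernelAsymptotics

section LocalConvergence

variable {X ι : Type*} [MeasurableSpace X] {μ : Measure X} {l : Filter ι} {u : X → ℝ}
  {v : ι → X → ℝ}

lemma eventually_integrable_of_tendsto_eLpNorm_sub (hu : Integrable u μ)
    (hv : ∀ i, AEStronglyMeasurable (v i) μ)
    (h : Tendsto (fun i => eLpNorm (v i - u) 1 μ) l (𝓝 0)) : ∀ᶠ i in l, Integrable (v i) μ := by
  filter_upwards [h.eventually_lt_const ENNReal.zero_lt_top] with i hi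
  simpa using (memLp_one_iff_integrable.1
    ⟨(hv i).sub hu.aestronglyMeasurable, hi⟩).add hu

lemma tendsto_integral_of_norm_sub_le {w : X → ℝ} {z : ι → X → ℝ} {C : ℝ} (hw : Integrable w μ)
    (hz : ∀ᶠ i in l, Integrable (z i) μ) (hC : ∀ i x, ‖z i x - w x‖ ≤ C * ‖v i x - u x‖)
    (h : Tendsto (fun i => eLpNorm (v i - u) 1 μ) l (𝓝 0)) :
    Tendsto (fun i => ∫ x, z i x ∂μ) l (𝓝 (∫ x, w x ∂μ)) := by
  refine tendsto_integral_of_L1' w hw.aestronglyMeasurable hz ?_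
  have hlim := ENNReal.Tendsto.const_mul (a := ENNReal.ofReal C) h (.inr ENNReal.ofReal_ne_top)
  rw [mul_zero] at hlim
  exact tendsto_of_tendsto_of_tendsto_of_le_of_le tendsto_const_nhds hlim (fun _ => zero_le)
    fun i => eLpNorm_le_mul_eLpNorm_of_ae_le_mul (.of_forall (hC i)) 1

lemma tendsto_integral_abs_of_tendsto_eLpNorm_sub (hu : Integrable u μ)
    (hv : ∀ᶠ i in l, Integrable (v i) μ) (h : Tendsto (fun i => eLpNorm (v i - u) 1 μ) l (𝓝 0)) :
    Tendsto (fun i => ∫ x, |v i x| ∂μ) l (𝓝 (∫ x, |u x| ∂μ)) :=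
  tendsto_integral_of_norm_sub_le hu.abs (hv.mono fun _ hvi => hvi.abs)
    (fun _ _ => (abs_abs_sub_abs_le _ _).trans (one_mul _).ge) h

lemma tendsto_integral_mul_of_tendsto_eLpNorm_sub {g : X → ℝ} {C : ℝ}
    (hg : AEStronglyMeasurable g μ) (hC : ∀ x, ‖g x‖ ≤ C) (hu : Integrable u μ)
    (hv : ∀ᶠ i in l, Integrable (v i) μ) (h : Tendsto (fun i => eLpNorm (v i - u) 1 μ) l (𝓝 0)) :
    Tendsto (fun i => ∫ x, v i x * g x ∂μ) l (𝓝 (∫ x, u x * g x ∂μ)) := by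
  refine tendsto_integral_of_norm_sub_le (C := C) (hu.mul_bdd hg (.of_forall hC))
    (hv.mono fun _ hvi => hvi.mul_bdd hg (.of_forall hC)) (fun i x => ?_) h
  rw [← sub_mul, norm_mul, mul_comm]
  gcongr
  exact hC x

lemma tendsto_eLpNorm_one_of_tendsto_integral_sq [IsFiniteMeasure μ]
    (hv : ∀ i, MemLp (v i) 2 μ)
    (h : Tendsto (fun i => ∫ x, v i x ^ 2 ∂μ) l (𝓝 0)) :
    Tendsto (fun i => eLpNorm (v i) 1 μ) l (𝓝 0) := by
  have hlim := ENNReal.Tendsto.mul_const (b := μ univ ^ (1 / 2 : ℝ))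
    (ENNReal.tendsto_ofReal (h.rpow_const (p := 1 / 2) (.inr one_half_pos.le)))
    (.inr (by finiteness))
  rw [Real.zero_rpow (by norm_num), ENNReal.ofReal_zero, zero_mul] at hlim
  refine tendsto_of_tendsto_of_tendsto_of_le_of_le tendsto_const_nhds hlim (fun _ => zero_le)
    fun i => ?_
  have h₁₂ := eLpNorm_le_eLpNorm_mul_rpow_measure_univ (p := 1) one_le_two (hv i).1
  rw [(hv i).eLpNorm_eq_integral_rpow_norm two_ne_zero ENNReal.ofNat_ne_top] at h₁₂
  norm_num at h₁₂ ⊢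
  exact h₁₂

lemma tendsto_eLpNorm_sub_one_restrict [IsFiniteMeasure μ] (hu : MemLp u 2 μ)
    (hv : ∀ i, MemLp (v i) 2 μ) (h : Tendsto (fun i => ∫ x, (v i x - u x) ^ 2 ∂μ) l (𝓝 0))
    (K : Set X) : Tendsto (fun i => eLpNorm (v i - u) 1 (μ.restrict K)) l (𝓝 0) :=
  tendsto_of_tendsto_of_tendsto_of_le_of_le tendsto_const_nhds
    (tendsto_eLpNorm_one_of_tendsto_integral_sq (fun i => (hv i).sub hu) h)
    (fun _ => zero_le) fun _ => eLpNorm_restrict_le _ _ _ _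

end LocalConvergence

section Liminf

variable {E : Type*} [NormedAddCommGroup E] [InnerProductSpace ℝ E] [FiniteDimensional ℝ E]
  [MeasurableSpace E] [BorelSpace E] [Nontrivial E] {Ω : Set E} {φ : E → E} {δ : ℝ}

lemma ofReal_divergence_sub_norm_sq_le_lintegral {s : ℝ} (hs : s < 1) (hφ : ContDiff ℝ 1 φ)
    (hφc : HasCompactSupport φ) {L : ℝ}
    (hL : ∀ x h, ‖φ (x + h) - φ x - fderiv ℝ φ x h‖ ≤ L * ‖h‖ ^ 2) (hδ : 0 < δ)
    (hΩ : MeasurableSet Ω) (hφΩ : Metric.cthickening δ (tsupport φ) ⊆ Ω) {v : E → ℝ}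
    (hv : Measurable v) (hvi : IntegrableOn v (Metric.cthickening δ (tsupport φ))) :
    ENNReal.ofReal ((∫ h, ‖h‖ ^ 2 ∂fracKernel E s δ) / Module.finrank ℝ E *
        (2 * (∫ x in Metric.cthickening δ (tsupport φ), v x * divergence φ x)
          - ∫ x, ‖φ x‖ ^ 2) - (∫ h, ‖h‖ ^ 3 ∂fracKernel E s δ) *
        (2 * L * ∫ x in Metric.cthickening δ (tsupport φ), |v x|)) ≤
      ENNReal.ofReal (1 - s) * ∫⁻ q in Ω ×ˢ Ω, ENNReal.ofReal
        ((v q.1 - v q.2) ^ 2 / ‖q.1 - q.2‖ ^ (Module.finrank ℝ E + 2 * s : ℝ)) := by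
  set K := Metric.cthickening δ (tsupport φ)
  have hK : MeasurableSet K := Metric.isClosed_cthickening.measurableSet
  have hSK : Metric.thickening δ (Function.support φ) ⊆ K :=
    (Metric.thickening_subset_of_subset δ (subset_tsupport φ)).trans
      (Metric.thickening_subset_cthickening δ _)
  have hdual := isIsometryInvariant_fracKernel.ofReal_le_lintegral_translate (μ := volume)
    (integrable_norm_pow_fracKernel hδ hs.le (by norm_num; linarith))
    (integrable_norm_pow_fracKernel hδ hs.le (by norm_num; linarith))
    (hvi.integrable_indicator hK) hφ hφc hL
  have hmul : ∀ x, K.indicator v x * divergence φ x =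
      K.indicator (fun x => v x * divergence φ x) x := fun x =>
    (indicator_mul_left K v _).symm
  have habs : ∀ x, |K.indicator v x| = K.indicator (fun x => |v x|) x := fun x =>
    (congr_fun (indicator_comp_of_zero (g := abs) abs_zero) x).symm
  simp only [hmul, habs, integral_indicator hK] at hdual
  exact hdual.trans <| lintegral_fracKernel_translate_le hs.le hΩ
    hφ.continuous.isOpen_support.measurableSet (hSK.trans hφΩ) hv fun x hx =>
      indicator_of_mem (hSK hx) v

lemma ofReal_divergence_sub_norm_sq_le_liminf {ι : Type*} {l : Filter ι} {u : E → ℝ}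
    {s : ι → ℝ} {v : ι → E → ℝ} (hΩ : IsOpen Ω) (hu : LocallyIntegrableOn u Ω)
    (hs : Tendsto s l (𝓝[<] 1)) (hv : ∀ i, Measurable (v i))
    (hvu : ∀ K ⊆ Ω, IsCompact K →
      Tendsto (fun i => eLpNorm (v i - u) 1 (volume.restrict K)) l (𝓝 0))
    (hφ : ContDiff ℝ 2 φ) (hφc : HasCompactSupport φ) (hφΩ : tsupport φ ⊆ Ω) :
    ENNReal.ofReal (volume.real (Metric.ball (0 : E) 1) / 2 *
        (2 * (∫ x, u x * divergence φ x) - ∫ x, ‖φ x‖ ^ 2)) ≤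
      liminf (fun i => ENNReal.ofReal (1 - s i) * ∫⁻ q in Ω ×ˢ Ω, ENNReal.ofReal
        ((v i q.1 - v i q.2) ^ 2 / ‖q.1 - q.2‖ ^ (Module.finrank ℝ E + 2 * s i : ℝ))) l := by
  obtain ⟨L, hL⟩ := exists_norm_add_sub_sub_fderiv_le hφ hφc
  obtain ⟨δ, hδ, hδΩ⟩ := hφc.exists_cthickening_subset_open hΩ hφΩ
  set K := Metric.cthickening δ (tsupport φ)
  have hK : IsCompact K := hφc.cthickening
  replace hφ : ContDiff ℝ 1 φ := hφ.of_le one_le_two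
  have hdiv := continuous_divergence hφ
  obtain ⟨C, hC⟩ := hdiv.bounded_above_of_compact_support (hasCompactSupport_divergence hφc)
  have hsupp : ∫ x in K, u x * divergence φ x = ∫ x, u x * divergence φ x :=
    setIntegral_eq_integral_of_forall_compl_eq_zero fun x hx => by
      rw [Function.notMem_support.1 fun h => hx <| Metric.self_subset_cthickening _ <|
        support_divergence_subset φ h, mul_zero]
  have huK : IntegrableOn u K := hu.integrableOn_compact_subset hδΩ hK
  have hvK : ∀ᶠ i in l, IntegrableOn (v i) K := eventually_integrable_of_tendsto_eLpNorm_sub huK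
    (fun i => (hv i).aestronglyMeasurable) (hvu K hδΩ hK)
  have hlim_div := tendsto_integral_mul_of_tendsto_eLpNorm_sub hdiv.aestronglyMeasurable hC huK
    hvK (hvu K hδΩ hK)
  have hlim_abs := tendsto_integral_abs_of_tendsto_eLpNorm_sub huK hvK (hvu K hδΩ hK)
  have hlim := ENNReal.tendsto_ofReal <|
    (((tendsto_integral_norm_sq_fracKernel (E := E) hδ).comp hs).mul
      ((hlim_div.const_mul 2).sub_const (∫ x, ‖φ x‖ ^ 2))).sub
    (((tendsto_integral_norm_pow_fracKernel (E := E) hδ (by norm_num : 2 < 3)).comp hs).mul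
      (hlim_abs.const_mul (2 * L)))
  rw [zero_mul, sub_zero, hsupp] at hlim
  obtain rfl | _ := l.eq_or_neBot
  · simp
  rw [← hlim.liminf_eq]
  refine liminf_le_liminf ?_
  filter_upwards [hs.eventually self_mem_nhdsWithin, hvK] with i hsi hvi
  exact ofReal_divergence_sub_norm_sq_le_lintegral hsi hφ hφc hL hδ hΩ.measurableSet hδΩ (hv i) hvi

end Liminf

section UnitBall

lemma sub_half_mul_gamma_sq_le {x : ℝ} (hx : 1 / 2 < x) :
    (x - 1 / 2) * Real.Gamma x ^ 2 ≤ Real.Gamma (x + 1 / 2) ^ 2 := by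
  have hx' : 0 < x - 1 / 2 := sub_pos.2 hx
  have hΓ := Real.Gamma_pos_of_pos hx'
  have hrec : Real.Gamma (x + 1 / 2) = (x - 1 / 2) * Real.Gamma (x - 1 / 2) := by
    rw [← Real.Gamma_add_one hx'.ne']
    ring_nf
  have hlog : Real.Gamma x ≤ √(Real.Gamma (x - 1 / 2) * Real.Gamma (x + 1 / 2)) := by
    have h := Real.Gamma_mul_add_mul_le_rpow_Gamma_mul_rpow_Gamma hx' (t := x + 1 / 2)
      (by linarith) one_half_pos one_half_pos (add_halves 1)
    rw [← Real.sqrt_eq_rpow, ← Real.sqrt_eq_rpow, ← Real.sqrt_mul hΓ.le] at h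
    convert h using 2
    ring
  calc (x - 1 / 2) * Real.Gamma x ^ 2
      ≤ (x - 1 / 2) * √(Real.Gamma (x - 1 / 2) * Real.Gamma (x + 1 / 2)) ^ 2 := by
        gcongr
    _ = Real.Gamma (x + 1 / 2) ^ 2 := by
        rw [hrec, Real.sq_sqrt (by positivity)]
        ring

lemma gamma_le_sqrt_two_mul_gamma_add_half {x : ℝ} (hx : 1 ≤ x) :
    Real.Gamma x ≤ √2 * Real.Gamma (x + 1 / 2) := by
  refine le_of_sq_le_sq ?_ (by positivity)
  rw [mul_pow, Real.sq_sqrt zero_le_two]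
  have := sub_half_mul_gamma_sq_le (x := x) (by linarith)
  nlinarith [sq_nonneg (Real.Gamma x)]

lemma volume_real_ball_euc (n : ℕ) : volume.real (Metric.ball (0 : Euc n) 1) =
    √Real.pi ^ n / Real.Gamma (n / 2 + 1) := by
  obtain rfl | hn := eq_or_ne n 0
  · simp [Measure.real, volume_euclideanSpace_eq_dirac]
  have : NeZero n := ⟨hn⟩
  rw [Measure.real, EuclideanSpace.volume_ball]
  simp only [ENNReal.ofReal_one, one_pow, one_mul, Fintype.card_fin]
  exact ENNReal.toReal_ofReal (by positivity)

lemma volume_real_ball_div_le_volume_real_ball_succ (n : ℕ) :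
    volume.real (Metric.ball (0 : Euc n) 1) / (n + 1) ≤
      volume.real (Metric.ball (0 : Euc (n + 1)) 1) := by
  have hΓ₁ : 0 < Real.Gamma ((n + 1) / 2) := Real.Gamma_pos_of_pos (by positivity)
  have hΓ₂ : 0 < Real.Gamma (n / 2 + 1) := Real.Gamma_pos_of_pos (by positivity)
  have hΓ : Real.Gamma ((n + 1) / 2) ≤ 2 * √Real.pi * Real.Gamma (n / 2 + 1) := by
    have hpi : 1 ≤ √Real.pi := Real.one_le_sqrt.2 (by linarith [Real.pi_gt_three])
    obtain rfl | hn := eq_or_ne n 0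
    · norm_num [Real.Gamma_one_half_eq]
      linarith
    · have hx : (1 : ℝ) ≤ (n + 1) / 2 := by
        have : (1 : ℝ) ≤ n := by exact_mod_cast Nat.one_le_iff_ne_zero.2 hn
        linarith
      have h2 : √2 ≤ 2 := (Real.sqrt_le_left zero_le_two).2 (by norm_num)
      calc Real.Gamma ((n + 1) / 2) ≤ √2 * Real.Gamma ((n + 1) / 2 + 1 / 2) :=
            gamma_le_sqrt_two_mul_gamma_add_half hx
        _ = √2 * Real.Gamma (n / 2 + 1) := by ring_nf
        _ ≤ 2 * √Real.pi * Real.Gamma (n / 2 + 1) := by gcongr; linarith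
  rw [volume_real_ball_euc, volume_real_ball_euc, div_div]
  push_cast
  rw [Real.Gamma_add_one (s := (n + 1) / 2) (by positivity),
    div_le_div_iff₀ (by positivity) (by positivity)]
  calc √Real.pi ^ n * ((n + 1) / 2 * Real.Gamma ((n + 1) / 2))
      ≤ √Real.pi ^ n * ((n + 1) / 2 * (2 * √Real.pi * Real.Gamma (n / 2 + 1))) := by gcongr
    _ = √Real.pi ^ (n + 1) * (Real.Gamma (n / 2 + 1) * (n + 1)) := by ring

lemma omegaPrev_div_le {N : ℕ} (hN : N ≠ 0) :
    omegaPrev N / (2 * N) ≤ volume.real (Metric.ball (0 : Euc N) 1) / 2 := by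
  obtain ⟨n, rfl⟩ := Nat.exists_eq_succ_of_ne_zero hN
  rw [mul_comm, ← div_div]
  push_cast
  exact div_le_div_of_nonneg_right (volume_real_ball_div_le_volume_real_ball_succ n) zero_le_two

end UnitBall

section GammaLiminf

open TopologicalSpace (Opens)

variable {N : ℕ} {Ω : Set (Euc N)} {u : Euc N → ℝ} {ι : Type*} {l : Filter ι} {s : ι → ℝ}
  {v : ι → Euc N → ℝ}

lemma memLp_two_of_l2sq_lt_top (hu : Measurable u) (h : l2sq N Ω u < ⊤) :
    MemLp u 2 (volume.restrict Ω) := by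
  refine (memLp_two_iff_integrable_sq hu.aestronglyMeasurable).2
    ⟨(hu.pow_const 2).aestronglyMeasurable, ?_⟩
  rwa [hasFiniteIntegral_iff_ofReal (.of_forall fun x => sq_nonneg _)]

theorem ofReal_mul_gradSq_le_liminf_semiSqOn (hN : N ≠ 0) (hΩ : IsOpen Ω)
    (hu : LocallyIntegrableOn u Ω) (hs : Tendsto s l (𝓝[<] 1)) (hv : ∀ i, Measurable (v i))
    (hvu : ∀ K ⊆ Ω, IsCompact K →
      Tendsto (fun i => eLpNorm (v i - u) 1 (volume.restrict K)) l (𝓝 0)) :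
    ENNReal.ofReal (volume.real (Metric.ball (0 : Euc N) 1) / 2) * gradSq N Ω u ≤
      liminf (fun i => ENNReal.ofReal (1 - s i) * semiSqOn N (s i) Ω (v i)) l := by
  have : NeZero N := ⟨hN⟩
  have hball : 0 < volume.real (Metric.ball (0 : Euc N) 1) / 2 :=
    half_pos (ENNReal.toReal_pos (Metric.measure_ball_pos _ _ one_pos).ne' measure_ball_lt_top.ne)
  lift Ω to Opens (Euc N) using hΩ
  rw [mul_comm, ← ENNReal.le_div_iff_mul_le (.inl (ENNReal.ofReal_pos.2 hball).ne')
    (.inl ENNReal.ofReal_ne_top)]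
  refine gradSq_le_of_forall_testFunction hu fun φ => ?_
  rw [ENNReal.le_div_iff_mul_le (.inl (ENNReal.ofReal_pos.2 hball).ne')
    (.inl ENNReal.ofReal_ne_top), mul_comm, ← ENNReal.ofReal_mul hball.le]
  simp only [semiSqOn_eq_lintegral_finrank]
  exact ofReal_divergence_sub_norm_sq_le_liminf Ω.isOpen hu hs hv hvu
    (mod_cast contDiff_infty.1 φ.contDiff 2) φ.hasCompactSupport φ.tsupport_subset

theorem statement11_general (hN : N ≠ 0) (hΩ : IsOpen Ω)
    (hu : LocallyIntegrableOn u Ω) (hs : Tendsto s l (𝓝[<] 1)) (hv : ∀ i, Measurable (v i))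
    (hvu : ∀ K ⊆ Ω, IsCompact K →
      Tendsto (fun i => eLpNorm (v i - u) 1 (volume.restrict K)) l (𝓝 0)) :
    F1 N Ω u ≤ liminf (fun i => Fs N (s i) Ω (v i)) l :=
  calc F1 N Ω u
      ≤ ENNReal.ofReal (volume.real (Metric.ball (0 : Euc N) 1) / 2) * gradSq N Ω u :=
        mul_le_mul_left (ENNReal.ofReal_le_ofReal (omegaPrev_div_le hN)) _
    _ ≤ liminf (fun i => ENNReal.ofReal (1 - s i) * semiSqOn N (s i) Ω (v i)) l :=
        ofReal_mul_gradSq_le_liminf_semiSqOn hN hΩ hu hs hv hvu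
    _ ≤ liminf (fun i => Fs N (s i) Ω (v i)) l :=
        liminf_le_liminf (.of_forall fun _ => mul_le_mul_right semiSqOn_le_minExtSemiSq _)

end GammaLiminf

/-- Proposition 3.4, Γ-liminf inequality: for every `u ∈ L²₀(Ω)` and every
sequence `u_k → u` in `L²(Ω)` with `s_k ↗ 1`, one has `F₁(u) ≤ liminf_k F_{s_k}(u_k)`. -/
theorem statement11 (N : ℕ) (hN : 2 ≤ N) (Ω : Set (Euc N)) (hΩ : IsLipschitzDomain N Ω)
    (u : Euc N → ℝ) (hu : memL20 N Ω u)
    (sk : ℕ → ℝ) (hmono : StrictMono sk) (hsk : ∀ k, sk k ∈ Set.Ioo (0 : ℝ) 1)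
    (hsk1 : Filter.Tendsto sk Filter.atTop (nhds 1))
    (uk : ℕ → Euc N → ℝ) (huk : ∀ k, memL20 N Ω (uk k))
    (hconv : Filter.Tendsto (fun k => ∫ x in Ω, (uk k x - u x) ^ 2)
      Filter.atTop (nhds 0)) :
    F1 N Ω u ≤ Filter.liminf (fun k => Fs N (sk k) Ω (uk k)) Filter.atTop := by
  have hfin : IsFiniteMeasure (volume.restrict Ω) :=
    isFiniteMeasure_restrict.2 hΩ.2.1.measure_lt_top.ne
  have hu2 := memLp_two_of_l2sq_lt_top hu.1 hu.2.1
  have huk2 := fun k => memLp_two_of_l2sq_lt_top (huk k).1 (huk k).2.1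
  have hu1 : IntegrableOn u Ω := hu2.integrable one_le_two
  have hs : Tendsto sk atTop (𝓝[<] 1) :=
    tendsto_nhdsWithin_iff.2 ⟨hsk1, .of_forall fun k => (hsk k).2⟩
  refine statement11_general (by omega) hΩ.1 hu1.locallyIntegrableOn hs (fun k => (huk k).1)
    fun K hK _ => ?_
  simpa only [Measure.restrict_restrict_of_subset hK] using
    tendsto_eLpNorm_sub_one_restrict hu2 huk2 hconv K

end FracNeumann
end
end

section
/- Let N ≥ 2, s ∈ (0,1), let B ⊂ ℝ^N be an open ball centered at the origin, and let u be a continuous first nontrivial eigenfunction on B which is not radially symmetric. Let p ∈ 𝕊^{N−1} be such that u is foliated Schwarz symmetric with respect to p. Then v := u − u∘σ_p is a first nontrivial eigenfunction on B which satisfies v∘σ_p = −v (antisymmetry with respect to the hyperplane {x·p = 0}), is foliated Schwarz symmetric with respect to p, and the open set {x ∈ B : v(x) ≠ 0} has exactly two connected components. -/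
open MeasureTheory Filter Topology Bornology Set
open scoped ENNReal NNReal

noncomputable section

/-!
The antisymmetric part `v = u - u ∘ σ` of `u` under `σ = σ_p` solves the same eigenvalue problem,
and it is nonnegative on the half-space `{x · p > 0}` because `u` is foliated Schwarz symmetric.
It does not vanish identically: otherwise `u` takes the same value at the two poles `± r p` of
each sphere, hence is constant on it by monotonicity in the polar angle.

The remaining point is a strong maximum principle on the half `Ω ∩ {x · p > 0}` of the domain.
Folding the interaction of a test function with `v` onto the half-space produces the positive
kernel `|x - y|^{-N-2s} - |x - σ y|^{-N-2s}`, so the set where `v` is bounded below pushes `v` up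
everywhere in that half of `Ω`. The comparison function is a small multiple of a truncated
paraboloid. Hence `v > 0` on one half of `Ω` and `v < 0` on the other, and these are the two nodal
domains.
-/

namespace FracNeumann

open scoped RealInnerProductSpace Real

/-! ### Reflections -/

section Reflection

variable {N : ℕ} {p : Euc N}

/-- The open half-space `{x · p > 0}` on one side of the reflecting hyperplane. -/
def posHalfSpace (p : Euc N) : Set (Euc N) := {x | 0 < ⟪x, p⟫}

theorem isOpen_posHalfSpace : IsOpen (posHalfSpace p) :=
  isOpen_lt continuous_const (by fun_prop)

theorem convex_posHalfSpace : Convex ℝ (posHalfSpace p) :=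
  convex_halfSpace_gt ⟨fun _ _ => inner_add_left _ _ _, fun _ _ => real_inner_smul_left _ _ _⟩ 0

theorem reflect_eq_reflection (hp : ‖p‖ = 1) : reflect N p = (ℝ ∙ p)ᗮ.reflection := by
  ext1 x
  rw [Submodule.reflection_orthogonal_apply, Submodule.reflection_singleton_apply]
  simp only [reflect, hp, real_inner_comm, RCLike.ofReal_real_eq_id, id_eq, one_pow, div_one]
  module

theorem continuous_reflect (hp : ‖p‖ = 1) : Continuous (reflect N p) :=
  reflect_eq_reflection hp ▸ LinearIsometryEquiv.continuous _

theorem reflect_reflect (hp : ‖p‖ = 1) (x : Euc N) : reflect N p (reflect N p x) = x := by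
  simp only [reflect_eq_reflection hp, Submodule.reflection_reflection]

theorem norm_reflect (hp : ‖p‖ = 1) (x : Euc N) : ‖reflect N p x‖ = ‖x‖ := by
  rw [reflect_eq_reflection hp, LinearIsometryEquiv.norm_map]

theorem inner_reflect (hp : ‖p‖ = 1) (x : Euc N) : ⟪reflect N p x, p⟫ = -⟪x, p⟫ := by
  rw [reflect, inner_sub_left, real_inner_smul_left, real_inner_self_eq_norm_sq, hp]
  ring

theorem norm_sub_reflect_sq (hp : ‖p‖ = 1) (x y : Euc N) :
    ‖x - reflect N p y‖ ^ 2 = ‖x - y‖ ^ 2 + 4 * ⟪x, p⟫ * ⟪y, p⟫ := by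
  rw [reflect, ← sub_add, norm_add_sq_real, real_inner_smul_right, inner_sub_left, norm_smul, hp,
    Real.norm_eq_abs, mul_one, sq_abs]
  ring

theorem norm_sub_lt_norm_sub_reflect (hp : ‖p‖ = 1) {x y : Euc N} (hx : x ∈ posHalfSpace p)
    (hy : y ∈ posHalfSpace p) : ‖x - y‖ < ‖x - reflect N p y‖ := by
  have hx' : 0 < ⟪x, p⟫ := hx
  have hy' : 0 < ⟪y, p⟫ := hy
  refine lt_of_pow_lt_pow_left₀ 2 (norm_nonneg _) ?_
  rw [norm_sub_reflect_sq hp, lt_add_iff_pos_right]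
  positivity

theorem reflect_preimage_ball (hp : ‖p‖ = 1) (R : ℝ) :
    reflect N p ⁻¹' Metric.ball 0 R = Metric.ball 0 R := by
  ext x
  simp only [mem_preimage, mem_ball_zero_iff, norm_reflect hp]

theorem isConnected_ball_inter_posHalfSpace (hp : ‖p‖ = 1) {R : ℝ} (hR : 0 < R) :
    IsConnected (Metric.ball 0 R ∩ posHalfSpace p) := by
  refine ⟨⟨(R / 2) • p, ?_, ?_⟩, ((convex_ball _ _).inter convex_posHalfSpace).isPreconnected⟩
  · rw [mem_ball_zero_iff, norm_smul, hp, Real.norm_of_nonneg (by positivity)]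
    linarith
  · change 0 < ⟪(R / 2) • p, p⟫
    rw [real_inner_smul_left, real_inner_self_eq_norm_sq, hp]
    positivity

end Reflection

/-! ### The kernel and the energy density -/

section Kernel

variable {N : ℕ} {s : ℝ}

theorem kern_symm (x y : Euc N) : kern N s x y = kern N s y x := by
  rw [kern, kern, norm_sub_rev]

theorem kern_nonneg (x y : Euc N) : 0 ≤ kern N s x y :=
  Real.rpow_nonneg (norm_nonneg _) _

theorem kern_pos {x y : Euc N} (h : x ≠ y) : 0 < kern N s x y :=
  Real.rpow_pos_of_pos (norm_sub_pos_iff.2 h) _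

theorem measurable_kern : Measurable fun q : Euc N × Euc N => kern N s q.1 q.2 :=
  ((measurable_fst.sub measurable_snd).norm).pow_const _

theorem continuous_kern (hs : 0 < s) : Continuous fun q : Euc N × Euc N => kern N s q.1 q.2 :=
  Continuous.rpow_const (by fun_prop) fun _ => Or.inr (by positivity)

theorem kern_isometry (g : Euc N ≃ₗᵢ[ℝ] Euc N) (x y : Euc N) :
    kern N s (g x) (g y) = kern N s x y := by
  rw [kern, kern, ← map_sub, LinearIsometryEquiv.norm_map]

theorem kern_lt_kern_reflect (hs : 0 < s) {p : Euc N} (hp : ‖p‖ = 1) {x y : Euc N}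
    (hx : x ∈ posHalfSpace p) (hy : y ∈ posHalfSpace p) :
    kern N s x y < kern N s x (reflect N p y) :=
  Real.rpow_lt_rpow (norm_nonneg _) (norm_sub_lt_norm_sub_reflect hp hx hy) (by positivity)

/-- The integrand of the bilinear form `bform N s Ω u v`, a function on `ℝ^{2N}` which does not
depend on `Ω`. -/
def formDensity (N : ℕ) (s : ℝ) (u v : Euc N → ℝ) (q : Euc N × Euc N) : ℝ :=
  (u q.1 - u q.2) * (v q.1 - v q.2) / kern N s q.1 q.2

theorem measurable_formDensity {u v : Euc N → ℝ} (hu : Measurable u) (hv : Measurable v) :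
    Measurable (formDensity N s u v) := by
  have := measurable_kern (N := N) (s := s)
  unfold formDensity
  fun_prop

theorem formDensity_self_nonneg (u : Euc N → ℝ) (q : Euc N × Euc N) :
    0 ≤ formDensity N s u u q :=
  div_nonneg (mul_self_nonneg _) (kern_nonneg _ _)

theorem abs_formDensity_le (u v : Euc N → ℝ) (q : Euc N × Euc N) :
    |formDensity N s u v q| ≤ formDensity N s u u q + formDensity N s v v q := by
  unfold formDensity
  rw [abs_div, abs_of_nonneg (kern_nonneg q.1 q.2), ← add_div]
  refine div_le_div_of_nonneg_right ?_ (kern_nonneg _ _)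
  rw [abs_mul]
  nlinarith [sq_nonneg (|u q.1 - u q.2| - |v q.1 - v q.2|), abs_mul_abs_self (u q.1 - u q.2),
    abs_mul_abs_self (v q.1 - v q.2), mul_self_nonneg (u q.1 - u q.2),
    mul_self_nonneg (v q.1 - v q.2)]

theorem formDensity_sub_left (u u' v : Euc N → ℝ) (q : Euc N × Euc N) :
    formDensity N s (fun x => u x - u' x) v q =
      formDensity N s u v q - formDensity N s u' v q := by
  unfold formDensity
  ring

theorem formDensity_const_mul_left (c : ℝ) (u v : Euc N → ℝ) (q : Euc N × Euc N) :
    formDensity N s (fun x => c * u x) v q = c * formDensity N s u v q := by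
  unfold formDensity
  ring

theorem formDensity_comp_isometry (g : Euc N ≃ₗᵢ[ℝ] Euc N) (u v : Euc N → ℝ)
    (q : Euc N × Euc N) :
    formDensity N s (fun x => u (g x)) (fun x => v (g x)) q =
      formDensity N s u v (Prod.map g g q) := by
  simp only [formDensity, Prod.map_fst, Prod.map_snd, kern_isometry]

theorem formDensity_eq_zero_of_notMem_reg {Ω : Set (Euc N)} {u φ : Euc N → ℝ}
    (hφ : ∀ x ∉ Ω, φ x = 0) {q : Euc N × Euc N} (hq : q ∉ reg N Ω) :
    formDensity N s u φ q = 0 := by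
  obtain ⟨h₁, h₂⟩ := not_or.1 hq
  rw [formDensity, hφ _ fun h => h₁ (subset_closure h), hφ _ fun h => h₂ (subset_closure h)]
  ring

end Kernel

/-! ### The energy space -/

section EnergySpace

variable {N : ℕ} {s : ℝ} {Ω : Set (Euc N)} {u v w : Euc N → ℝ}

theorem measurableSet_reg : MeasurableSet (reg N Ω) :=
  (measurable_fst isClosed_closure.measurableSet).union
    (measurable_snd isClosed_closure.measurableSet)

theorem memHs_iff : memHs N s Ω u ↔ Measurable u ∧ IntegrableOn (fun x => u x * u x) Ω ∧
    IntegrableOn (formDensity N s u u) (reg N Ω) := by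
  refine and_congr_right fun hu => and_congr ?_ ?_
  · have hm : Measurable fun x => u x * u x := hu.mul hu
    rw [IntegrableOn, Integrable, and_iff_right hm.aestronglyMeasurable,
      hasFiniteIntegral_iff_ofReal (ae_of_all _ fun _ => mul_self_nonneg _), l2sq]
    simp only [sq]
  · rw [IntegrableOn, Integrable, hasFiniteIntegral_iff_ofReal
      (ae_of_all _ (formDensity_self_nonneg u)),
      and_iff_right (measurable_formDensity hu hu).aestronglyMeasurable, semiSq]
    simp only [formDensity, sq]

namespace memHs

theorem integrableOn_mul (hu : memHs N s Ω u) (hv : memHs N s Ω v) :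
    IntegrableOn (fun x => u x * v x) Ω := by
  refine ((memHs_iff.1 hu).2.1.add (memHs_iff.1 hv).2.1).mono'
    (hu.1.mul hv.1).aestronglyMeasurable (ae_of_all _ fun x => ?_)
  rw [Pi.add_apply, Real.norm_eq_abs, abs_le]
  constructor <;> nlinarith [sq_nonneg (u x + v x), sq_nonneg (u x - v x)]

theorem integrableOn_formDensity (hu : memHs N s Ω u) (hv : memHs N s Ω v) :
    IntegrableOn (formDensity N s u v) (reg N Ω) :=
  ((memHs_iff.1 hu).2.2.add (memHs_iff.1 hv).2.2).mono'
    (measurable_formDensity hu.1 hv.1).aestronglyMeasurable (ae_of_all _ (abs_formDensity_le u v))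

theorem of_abs_le (hu : memHs N s Ω u) (hv : memHs N s Ω v) (hw : Measurable w)
    (hle : ∀ x, |w x| ≤ |u x| + |v x|)
    (hsub : ∀ x y, |w x - w y| ≤ |u x - u y| + |v x - v y|) : memHs N s Ω w := by
  have mul_self_le {a b c : ℝ} (h : |a| ≤ |b| + |c|) : a * a ≤ 2 * (b * b + c * c) := by
    nlinarith [abs_mul_abs_self a, abs_mul_abs_self b, abs_mul_abs_self c, abs_nonneg a,
      sq_nonneg (|b| - |c|)]
  obtain ⟨-, hu₂, hu₃⟩ := memHs_iff.1 hu
  obtain ⟨-, hv₂, hv₃⟩ := memHs_iff.1 hv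
  refine memHs_iff.2 ⟨hw, ?_, ?_⟩
  · refine ((hu₂.add hv₂).const_mul 2).mono' (hw.mul hw).aestronglyMeasurable
      (ae_of_all _ fun x => ?_)
    rw [Real.norm_of_nonneg (mul_self_nonneg _)]
    exact mul_self_le (hle x)
  · refine ((hu₃.add hv₃).const_mul 2).mono' (measurable_formDensity hw hw).aestronglyMeasurable
      (ae_of_all _ fun q => ?_)
    rw [Real.norm_of_nonneg (formDensity_self_nonneg _ _), Pi.add_apply]
    unfold formDensity
    rw [← add_div, ← mul_div_assoc]
    exact div_le_div_of_nonneg_right (mul_self_le (hsub _ _)) (kern_nonneg _ _)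

theorem sub (hu : memHs N s Ω u) (hv : memHs N s Ω v) : memHs N s Ω fun x => u x - v x := by
  refine of_abs_le hu hv (hu.1.sub hv.1) (fun x => abs_sub _ _) fun x y => ?_
  rw [sub_sub_sub_comm]
  exact abs_sub _ _

theorem const_mul (hu : memHs N s Ω u) (c : ℝ) : memHs N s Ω fun x => c * u x := by
  obtain ⟨hm, h₂, h₃⟩ := memHs_iff.1 hu
  refine memHs_iff.2 ⟨hm.const_mul c, (h₂.const_mul (c * c)).congr (ae_of_all _ fun x => ?_),
    (h₃.const_mul (c * c)).congr (ae_of_all _ fun q => ?_)⟩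
  · simp only
    ring
  · simp only [formDensity]
    ring

theorem integrable_formDensity (hu : memHs N s Ω u) (hv : memHs N s Ω v)
    (hΩ : ∀ x ∉ Ω, v x = 0) : Integrable (formDensity N s u v) :=
  (integrableOn_iff_integrable_of_support_subset fun _ hq => by_contra fun hreg =>
    hq (formDensity_eq_zero_of_notMem_reg hΩ hreg)).1 (hu.integrableOn_formDensity hv)

end memHs

theorem bform_eq_setIntegral : bform N s Ω u v = ∫ q in reg N Ω, formDensity N s u v q :=
  rfl

theorem bform_eq_integral_formDensity (hv : ∀ x ∉ Ω, v x = 0) :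
    bform N s Ω u v = ∫ q, formDensity N s u v q :=
  setIntegral_eq_integral_of_forall_compl_eq_zero fun _ => formDensity_eq_zero_of_notMem_reg hv

theorem bform_self_nonneg : 0 ≤ bform N s Ω u u :=
  integral_nonneg (formDensity_self_nonneg u)

theorem bform_sub_left {u' : Euc N → ℝ} (hu : memHs N s Ω u) (hu' : memHs N s Ω u')
    (hv : memHs N s Ω v) :
    bform N s Ω (fun x => u x - u' x) v = bform N s Ω u v - bform N s Ω u' v := by
  simp only [bform_eq_setIntegral, formDensity_sub_left]
  exact integral_sub (hu.integrableOn_formDensity hv) (hu'.integrableOn_formDensity hv)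

theorem eq_of_bform_self_eq_zero (hΩ : IsOpen Ω) (hc : Continuous u) (hu : memHs N s Ω u)
    (h : bform N s Ω u u = 0) {x : Euc N} (hx : x ∈ Ω) (y : Euc N) : u x = u y := by
  by_contra hxy
  have hae := (integral_eq_zero_iff_of_nonneg (formDensity_self_nonneg u)
    (hu.integrableOn_formDensity hu)).1 h
  rw [EventuallyEq, ae_restrict_iff' measurableSet_reg] at hae
  let U : Set (Euc N × Euc N) := Prod.fst ⁻¹' Ω ∩ {q | u q.1 ≠ u q.2}
  have hU : IsOpen U := (hΩ.preimage continuous_fst).inter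
    (isOpen_ne_fun (hc.comp continuous_fst) (hc.comp continuous_snd))
  refine (hU.measure_pos volume ⟨(x, y), hx, hxy⟩).ne' (measure_mono_null ?_ (ae_iff.1 hae))
  rintro q ⟨hqΩ, hq⟩ hzero
  refine div_ne_zero (mul_self_ne_zero.2 (sub_ne_zero.2 hq)) (kern_pos fun h => ?_).ne'
    (hzero (Or.inl (subset_closure hqΩ)))
  exact hq (congrArg u h)

end EnergySpace

/-! ### Invariance under linear isometries -/

section Isometry

variable {N : ℕ} {s : ℝ} {Ω : Set (Euc N)} {g : Euc N ≃ₗᵢ[ℝ] Euc N}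

theorem reg_preimage_isometry (hΩ : g ⁻¹' Ω = Ω) : Prod.map g g ⁻¹' reg N Ω = reg N Ω := by
  have hcl : g ⁻¹' closure Ω = closure Ω := by
    conv_rhs => rw [← hΩ]
    exact g.toHomeomorph.preimage_closure Ω
  ext q
  exact or_congr (Set.ext_iff.1 hcl q.1) (Set.ext_iff.1 hcl q.2)

theorem measurePreserving_prodMap_isometry (g : Euc N ≃ₗᵢ[ℝ] Euc N) :
    MeasurePreserving (Prod.map g g) volume volume :=
  g.measurePreserving.prod g.measurePreserving

theorem measurableEmbedding_prodMap_isometry (g : Euc N ≃ₗᵢ[ℝ] Euc N) :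
    MeasurableEmbedding (Prod.map g g) :=
  (g.toHomeomorph.prodCongr g.toHomeomorph).measurableEmbedding

theorem setIntegral_comp_isometry (hΩ : g ⁻¹' Ω = Ω) (f : Euc N → ℝ) :
    ∫ x in Ω, f (g x) = ∫ x in Ω, f x := by
  conv_lhs => rw [← hΩ]
  exact g.measurePreserving.setIntegral_preimage_emb g.toHomeomorph.measurableEmbedding f Ω

theorem memHs.comp_isometry {u : Euc N → ℝ} (hu : memHs N s Ω u) (hΩ : g ⁻¹' Ω = Ω) :
    memHs N s Ω fun x => u (g x) := by
  obtain ⟨hm, h₂, h₃⟩ := memHs_iff.1 hu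
  refine memHs_iff.2 ⟨hm.comp g.continuous.measurable, ?_, ?_⟩
  · rw [← hΩ]
    exact (g.measurePreserving.integrableOn_comp_preimage
      g.toHomeomorph.measurableEmbedding).2 h₂
  · rw [funext (formDensity_comp_isometry g u u), ← reg_preimage_isometry hΩ]
    exact ((measurePreserving_prodMap_isometry g).integrableOn_comp_preimage
      (measurableEmbedding_prodMap_isometry g)).2 h₃

theorem bform_comp_isometry (hΩ : g ⁻¹' Ω = Ω) (u v : Euc N → ℝ) :
    bform N s Ω (fun x => u (g x)) (fun x => v (g x)) = bform N s Ω u v := by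
  rw [bform_eq_setIntegral, bform_eq_setIntegral]
  conv_lhs => rw [← reg_preimage_isometry hΩ]
  simp only [formDensity_comp_isometry]
  exact (measurePreserving_prodMap_isometry g).setIntegral_preimage_emb
    (measurableEmbedding_prodMap_isometry g) _ _

end Isometry

/-! ### Weak solutions of the Neumann eigenvalue problem -/

theorem cNs_pos {N : ℕ} {s : ℝ} (hs : s ∈ Ioo (0 : ℝ) 1) : 0 < cNs N s := by
  have hs₀ := hs.1
  have hΓ : 0 < Real.Gamma (1 - s) := Real.Gamma_pos_of_pos (sub_pos.2 hs.2)
  rw [cNs]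
  exact div_pos (mul_pos (by positivity) (Real.Gamma_pos_of_pos (by positivity)))
    (mul_pos (Real.rpow_pos_of_pos Real.pi_pos _) hΓ)

/-- `u` solves the Neumann eigenvalue problem `(-Δ)^s u = μ u` in `Ω`, `𝒩_s u = 0` in `Ω^c` weakly.
The trivial solution `u = 0` is allowed, so that solutions form a linear space. -/
def IsNeumannSolution (N : ℕ) (s : ℝ) (Ω : Set (Euc N)) (μ : ℝ) (u : Euc N → ℝ) : Prop :=
  memHs N s Ω u ∧ ∀ v, memHs N s Ω v → cNs N s / 2 * bform N s Ω u v = μ * ∫ x in Ω, u x * v x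

namespace IsNeumannSolution

variable {N : ℕ} {s μ : ℝ} {Ω : Set (Euc N)} {u v : Euc N → ℝ}

theorem sub (hu : IsNeumannSolution N s Ω μ u) (hv : IsNeumannSolution N s Ω μ v) :
    IsNeumannSolution N s Ω μ fun x => u x - v x := by
  refine ⟨hu.1.sub hv.1, fun w hw => ?_⟩
  simp only [sub_mul]
  rw [bform_sub_left hu.1 hv.1 hw,
    integral_sub (hu.1.integrableOn_mul hw) (hv.1.integrableOn_mul hw), mul_sub, mul_sub,
    hu.2 w hw, hv.2 w hw]

theorem comp_isometry {g : Euc N ≃ₗᵢ[ℝ] Euc N} (hu : IsNeumannSolution N s Ω μ u)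
    (hΩ : g ⁻¹' Ω = Ω) : IsNeumannSolution N s Ω μ fun x => u (g x) := by
  refine ⟨hu.1.comp_isometry hΩ, fun v hv => ?_⟩
  have hΩ' : g.symm ⁻¹' Ω = Ω := by
    conv_lhs => rw [← hΩ]
    rw [← preimage_comp, LinearIsometryEquiv.self_comp_symm, preimage_id]
  have hsol := hu.2 _ (hv.comp_isometry hΩ')
  rw [← bform_comp_isometry hΩ, ← setIntegral_comp_isometry hΩ] at hsol
  simpa only [LinearIsometryEquiv.symm_apply_apply] using hsol

theorem eq_zero_of_ae_eq_zero (hs : s ∈ Ioo (0 : ℝ) 1) (hΩ : IsOpen Ω) (hΩ' : Ω.Nonempty)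
    (hc : Continuous u) (hu : IsNeumannSolution N s Ω μ u)
    (h₀ : u =ᵐ[volume.restrict Ω] 0) (x : Euc N) : u x = 0 := by
  obtain ⟨x₀, hx₀⟩ := hΩ'
  have hmass : ∫ x in Ω, u x * u x = 0 :=
    integral_eq_zero_of_ae (h₀.mono fun x hx => by simp only [hx, Pi.zero_apply, mul_zero])
  have hform : bform N s Ω u u = 0 := by
    have := hu.2 u hu.1
    rw [hmass, mul_zero] at this
    exact (mul_eq_zero.1 this).resolve_left (half_pos (cNs_pos hs)).ne'
  rw [← eq_of_bform_self_eq_zero hΩ hc hu.1 hform hx₀ x]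
  exact Measure.eqOn_open_of_ae_eq h₀ hΩ hc.continuousOn continuousOn_const hx₀

theorem eigenvalue_nonneg (hs : s ∈ Ioo (0 : ℝ) 1) (hu : IsNeumannSolution N s Ω μ u)
    (h₀ : ¬ u =ᵐ[volume.restrict Ω] 0) : 0 ≤ μ := by
  have hmass : 0 < ∫ x in Ω, u x * u x := by
    refine (integral_nonneg fun x => mul_self_nonneg (u x)).lt_of_ne' fun h => h₀ ?_
    filter_upwards [(integral_eq_zero_iff_of_nonneg (fun x => mul_self_nonneg (u x))
      (hu.1.integrableOn_mul hu.1)).1 h] with x hx using mul_self_eq_zero.1 hx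
  refine nonneg_of_mul_nonneg_left ?_ hmass
  rw [← hu.2 u hu.1]
  exact mul_nonneg (half_pos (cNs_pos hs)).le bform_self_nonneg

end IsNeumannSolution

/-! ### The truncated Lévy kernel -/

section TruncKern

variable {N : ℕ} {s : ℝ}

/-- The density `min {|z|², 1} |z|^{-N-2s}` of the Lévy measure of `(-Δ)^s`, truncated so as to be
integrable. -/
def truncKern (N : ℕ) (s : ℝ) (z : Euc N) : ℝ := min (‖z‖ ^ 2) 1 / ‖z‖ ^ ((N : ℝ) + 2 * s)

theorem integrableOn_min_sq_one_mul_rpow (hs : s ∈ Ioo (0 : ℝ) 1) :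
    IntegrableOn (fun r : ℝ => min (r ^ 2) 1 * r ^ (-1 - 2 * s)) (Ioi 0) := by
  rw [← Ioc_union_Ioi_eq_Ioi zero_le_one]
  refine IntegrableOn.union ?_ ?_
  · have hnear : IntegrableOn (fun r : ℝ => r ^ (1 - 2 * s)) (Ioc 0 1) := by
      rw [← intervalIntegrable_iff_integrableOn_Ioc_of_le zero_le_one]
      exact intervalIntegral.intervalIntegrable_rpow' (by linarith [hs.2])
    refine hnear.congr_fun (fun r hr => ?_) measurableSet_Ioc
    simp only
    rw [min_eq_left (pow_le_one₀ hr.1.le hr.2), ← Real.rpow_natCast, ← Real.rpow_add hr.1]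
    congr 1
    push_cast
    ring
  · have hfar : IntegrableOn (fun r : ℝ => r ^ (-1 - 2 * s)) (Ioi 1) :=
      integrableOn_Ioi_rpow_of_lt (by linarith [hs.1]) one_pos
    refine hfar.congr_fun (fun r hr => ?_) measurableSet_Ioi
    simp only
    rw [min_eq_right (one_le_pow₀ (le_of_lt hr)), one_mul]

theorem integrable_truncKern (hs : s ∈ Ioo (0 : ℝ) 1) : Integrable (truncKern N s) := by
  rcases N.eq_zero_or_pos with rfl | hN
  · exact Integrable.of_finite
  have : Nonempty (Fin N) := ⟨⟨0, hN⟩⟩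
  refine (integrable_fun_norm_addHaar (volume : Measure (Euc N))
    (f := fun r : ℝ => min (r ^ 2) 1 / r ^ ((N : ℝ) + 2 * s))).2 ?_
  rw [finrank_euclideanSpace_fin]
  refine (integrableOn_min_sq_one_mul_rpow hs).congr_fun (fun r (hr : 0 < r) => ?_)
    measurableSet_Ioi
  simp only [smul_eq_mul]
  rw [mul_div_left_comm, ← Real.rpow_natCast r (N - 1), Nat.cast_pred hN, ← Real.rpow_sub hr]
  ring_nf

end TruncKern

/-! ### Lipschitz functions and second differences -/

section SecondDifference

variable {N : ℕ} {s : ℝ} {η φ : Euc N → ℝ}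

theorem formDensity_self_le {C : ℝ} {x y : Euc N}
    (h : (η x - η y) ^ 2 ≤ C * min (‖x - y‖ ^ 2) 1) :
    formDensity N s η η (x, y) ≤ C * truncKern N s (x - y) := by
  rw [formDensity, truncKern, ← mul_div_assoc, ← sq]
  exact div_le_div_of_nonneg_right h (kern_nonneg _ _)

theorem integrable_indicator_mul_truncKern_sub (hs : s ∈ Ioo (0 : ℝ) 1) {S : Set (Euc N)}
    (hS : IsCompact S) :
    Integrable fun q : Euc N × Euc N => S.indicator 1 q.1 * truncKern N s (q.1 - q.2) := by
  have hind : Integrable (S.indicator (1 : Euc N → ℝ)) :=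
    (integrable_indicator_iff hS.measurableSet).2 (integrableOn_const hS.measure_ne_top)
  refine (hind.convolution_integrand (ContinuousLinearMap.mul ℝ ℝ)
    (integrable_truncKern hs)).swap.congr (ae_of_all _ fun q => ?_)
  simp only [Function.comp_apply, ContinuousLinearMap.mul_apply', Prod.fst_swap, Prod.snd_swap,
    truncKern, norm_sub_rev]

theorem memHs_of_sq_sub_le (hs : s ∈ Ioo (0 : ℝ) 1) (Ω : Set (Euc N)) (hη : Continuous η)
    (hη' : HasCompactSupport η) {C : ℝ}
    (h : ∀ x y, (η x - η y) ^ 2 ≤ C * min (‖x - y‖ ^ 2) 1) : memHs N s Ω η := by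
  let S := tsupport η
  let F : Euc N × Euc N → ℝ := fun q => S.indicator 1 q.1 * truncKern N s (q.1 - q.2)
  have hF : Integrable F := integrable_indicator_mul_truncKern_sub hs hη'
  refine memHs_iff.2 ⟨hη.measurable, ?_, ?_⟩
  · exact ((hη.mul hη).integrable_of_hasCompactSupport hη'.mul_left).integrableOn
  · refine (((hF.add hF.swap).const_mul C).mono'
      (measurable_formDensity hη.measurable hη.measurable).aestronglyMeasurable
      (ae_of_all _ fun q => ?_)).integrableOn
    rw [Real.norm_of_nonneg (formDensity_self_nonneg _ _)]
    obtain ⟨x, y⟩ := q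
    have hle : formDensity N s η η (x, y) ≤ C * truncKern N s (x - y) := formDensity_self_le (h x y)
    have hnonneg := (formDensity_self_nonneg η (x, y)).trans hle
    have hsymm : truncKern N s (y - x) = truncKern N s (x - y) := by
      simp only [truncKern, norm_sub_rev]
    simp only [F, Pi.add_apply, Function.comp_apply, Prod.fst_swap, Prod.snd_swap, hsymm]
    by_cases hx : x ∈ S <;> by_cases hy : y ∈ S
    all_goals simp only [hx, hy, indicator_of_mem, indicator_of_notMem, not_false_eq_true,
      Pi.one_apply, one_mul, zero_mul, add_zero, zero_add]
    · linarith
    · exact hle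
    · exact hle
    · simp only [formDensity, image_eq_zero_of_notMem_tsupport hx,
        image_eq_zero_of_notMem_tsupport hy, sub_self, zero_div, mul_zero, le_refl]

theorem integral_sub_translate_mul_sub_translate (hη : Continuous η) {b : ℝ}
    (hb : ∀ x, ‖η x‖ ≤ b) (hφ : Integrable φ) (z : Euc N) :
    ∫ x, (η x - η (x + z)) * (φ x - φ (x + z)) =
      ∫ x, (2 * η x - η (x + z) - η (x - z)) * φ x := by
  let f : Euc N → ℝ := fun x => (η x - η (x + z)) * φ x
  let g : Euc N → ℝ := fun x => (η (x - z) - η x) * φ x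
  have hf : Integrable f := hφ.bdd_mul (c := b + b) (by fun_prop)
    (ae_of_all _ fun x => (norm_sub_le _ _).trans (add_le_add (hb _) (hb _)))
  have hg : Integrable g := hφ.bdd_mul (c := b + b) (by fun_prop)
    (ae_of_all _ fun x => (norm_sub_le _ _).trans (add_le_add (hb _) (hb _)))
  calc ∫ x, (η x - η (x + z)) * (φ x - φ (x + z))
      = ∫ x, (f x - g (x + z)) := by simp only [f, g, add_sub_cancel_right, mul_sub]
    _ = ∫ x, (f x - g x) := by
      rw [integral_sub hf (hg.comp_add_right z), integral_add_right_eq_self, integral_sub hf hg]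
    _ = ∫ x, (2 * η x - η (x + z) - η (x - z)) * φ x := by
      congr 1 with x
      simp only [f, g]
      ring

theorem integral_formDensity_translate_le (hη : Continuous η) {b C : ℝ} (hb : ∀ x, ‖η x‖ ≤ b)
    (hη₂ : ∀ x z, 2 * η x - η (x + z) - η (x - z) ≤ C * min (‖z‖ ^ 2) 1)
    (hφ : Integrable φ) (hφ₀ : ∀ x, 0 ≤ φ x) (z : Euc N) :
    ∫ x, formDensity N s η φ (x, x + z) ≤ (C * ∫ x, φ x) * truncKern N s z := by
  have hkern (x : Euc N) : kern N s x (x + z) = ‖z‖ ^ ((N : ℝ) + 2 * s) := by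
    rw [kern, sub_add_cancel_left, norm_neg]
  simp only [formDensity, hkern]
  rw [integral_div, integral_sub_translate_mul_sub_translate hη hb hφ, truncKern,
    ← mul_div_assoc]
  refine div_le_div_of_nonneg_right ?_ (by positivity)
  rw [mul_right_comm, ← integral_const_mul]
  have hbdd (x : Euc N) : ‖2 * η x - η (x + z) - η (x - z)‖ ≤ 2 * b + b + b := by
    refine (norm_sub_le _ _).trans (add_le_add ((norm_sub_le _ _).trans (add_le_add ?_ (hb _)))
      (hb _))
    rw [norm_mul, Real.norm_two]
    exact mul_le_mul_of_nonneg_left (hb x) zero_le_two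
  exact integral_mono (hφ.bdd_mul (by fun_prop) (ae_of_all _ hbdd)) (hφ.const_mul _)
    fun x => mul_le_mul_of_nonneg_right (hη₂ x z) (hφ₀ x)

theorem integral_formDensity_le_of_second_difference_le (hs : s ∈ Ioo (0 : ℝ) 1)
    (hη : Continuous η) {b C : ℝ} (hb : ∀ x, ‖η x‖ ≤ b)
    (hη₂ : ∀ x z, 2 * η x - η (x + z) - η (x - z) ≤ C * min (‖z‖ ^ 2) 1)
    (hφ : Integrable φ) (hφ₀ : ∀ x, 0 ≤ φ x) (hint : Integrable (formDensity N s η φ)) :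
    ∫ q, formDensity N s η φ q ≤ (C * ∫ z, truncKern N s z) * ∫ x, φ x := by
  have hshear := measurePreserving_prod_add (volume : Measure (Euc N)) (volume : Measure (Euc N))
  have hemb : MeasurableEmbedding fun q : Euc N × Euc N => (q.1, q.1 + q.2) :=
    (MeasurableEquiv.shearAddRight (Euc N)).measurableEmbedding
  have hint' : Integrable fun q : Euc N × Euc N => formDensity N s η φ (q.1, q.1 + q.2) :=
    (hshear.integrable_comp_emb hemb).2 hint
  calc ∫ q, formDensity N s η φ q
      = ∫ q : Euc N × Euc N, formDensity N s η φ (q.1, q.1 + q.2) :=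
        (hshear.integral_comp hemb (formDensity N s η φ)).symm
    _ = ∫ z, ∫ x, formDensity N s η φ (x, x + z) := integral_prod_symm _ hint'
    _ ≤ ∫ z, (C * ∫ x, φ x) * truncKern N s z :=
        integral_mono hint'.integral_prod_right ((integrable_truncKern hs).const_mul _)
          (integral_formDensity_translate_le hη hb hη₂ hφ hφ₀)
    _ = (C * ∫ z, truncKern N s z) * ∫ x, φ x := by
        rw [integral_const_mul]
        ring

end SecondDifference

section QuadraticBump

variable {N : ℕ} {s ρ : ℝ} {x₀ : Euc N}

/-- The truncated paraboloid `(ρ² - |x - x₀|²)⁺`. As a maximum of a concave quadratic and a constant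
it has second differences bounded on the favourable side, which is all a lower barrier needs. -/
def quadraticBump (x₀ : Euc N) (ρ : ℝ) (x : Euc N) : ℝ := max (ρ ^ 2 - ‖x - x₀‖ ^ 2) 0

theorem continuous_quadraticBump : Continuous (quadraticBump x₀ ρ) := by
  unfold quadraticBump
  fun_prop

theorem quadraticBump_nonneg (x : Euc N) : 0 ≤ quadraticBump x₀ ρ x :=
  le_max_right _ _

theorem quadraticBump_le (x : Euc N) : quadraticBump x₀ ρ x ≤ ρ ^ 2 :=
  max_le (sub_le_self _ (sq_nonneg _)) (sq_nonneg _)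

theorem quadraticBump_self (hρ : 0 < ρ) : 0 < quadraticBump x₀ ρ x₀ :=
  lt_max_of_lt_left (by simpa using pow_pos hρ 2)

theorem tsupport_quadraticBump_subset (hρ : 0 ≤ ρ) :
    tsupport (quadraticBump x₀ ρ) ⊆ Metric.closedBall x₀ ρ := by
  refine closure_minimal (fun x hx => ?_) Metric.isClosed_closedBall
  rw [mem_closedBall_iff_norm]
  contrapose! hx
  exact Function.notMem_support.2 (max_eq_right (sub_nonpos.2 (pow_le_pow_left₀ hρ hx.le 2)))

theorem hasCompactSupport_quadraticBump (hρ : 0 ≤ ρ) : HasCompactSupport (quadraticBump x₀ ρ) :=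
  (isCompact_closedBall x₀ ρ).of_isClosed_subset (isClosed_tsupport _)
    (tsupport_quadraticBump_subset hρ)

theorem quadraticBump_eq (hρ : 0 ≤ ρ) (x : Euc N) :
    quadraticBump x₀ ρ x = ρ ^ 2 - min ‖x - x₀‖ ρ ^ 2 := by
  unfold quadraticBump
  rcases le_total ‖x - x₀‖ ρ with h | h
  · rw [min_eq_left h, max_eq_left (sub_nonneg.2 (pow_le_pow_left₀ (norm_nonneg _) h 2))]
  · rw [min_eq_right h, sub_self, max_eq_right (sub_nonpos.2 (pow_le_pow_left₀ hρ h 2))]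

theorem abs_quadraticBump_sub_le (hρ : 0 ≤ ρ) (x y : Euc N) :
    |quadraticBump x₀ ρ x - quadraticBump x₀ ρ y| ≤ 2 * ρ * ‖x - y‖ := by
  let m : Euc N → ℝ := fun x => min ‖x - x₀‖ ρ
  have hm (x) : 0 ≤ m x := le_min (norm_nonneg _) hρ
  have hm' (x) : m x ≤ ρ := min_le_right _ _
  have hlip : |m y - m x| ≤ ‖x - y‖ := by
    refine (abs_min_sub_min_le_max _ _ _ _).trans ?_
    rw [sub_self, abs_zero, max_eq_left (abs_nonneg _), abs_sub_comm]
    simpa using abs_norm_sub_norm_le (x - x₀) (y - x₀)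
  calc |quadraticBump x₀ ρ x - quadraticBump x₀ ρ y|
      = (m x + m y) * |m y - m x| := by
        rw [quadraticBump_eq hρ, quadraticBump_eq hρ, ← abs_of_nonneg (add_nonneg (hm x) (hm y)),
          ← abs_mul]
        congr 1
        simp only [m]
        ring
    _ ≤ 2 * ρ * ‖x - y‖ :=
        mul_le_mul (by linarith [hm' x, hm' y]) hlip (abs_nonneg _) (by positivity)

theorem le_max_mul_min_one {a A B r : ℝ} (hr : 0 ≤ r) (hA : a ≤ A * r) (hB : a ≤ B)
    (hB₀ : 0 ≤ B) : a ≤ max A B * min r 1 := by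
  rw [mul_min_of_nonneg _ _ (le_max_of_le_right hB₀), mul_one]
  exact le_min (hA.trans (mul_le_mul_of_nonneg_right (le_max_left _ _) hr))
    (hB.trans (le_max_right _ _))

theorem quadraticBump_sub_sq_le (hρ : 0 ≤ ρ) (x y : Euc N) :
    (quadraticBump x₀ ρ x - quadraticBump x₀ ρ y) ^ 2 ≤
      max ((2 * ρ) ^ 2) ((ρ ^ 2) ^ 2) * min (‖x - y‖ ^ 2) 1 := by
  refine le_max_mul_min_one (sq_nonneg _) ?_ ?_ (sq_nonneg _)
  · rw [← sq_abs, ← mul_pow]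
    exact pow_le_pow_left₀ (abs_nonneg _) (abs_quadraticBump_sub_le hρ x y) 2
  · have hx := quadraticBump_nonneg (x₀ := x₀) (ρ := ρ) x
    have hy := quadraticBump_nonneg (x₀ := x₀) (ρ := ρ) y
    refine sq_le_sq' ?_ ?_ <;> linarith [quadraticBump_le (x₀ := x₀) (ρ := ρ) x,
      quadraticBump_le (x₀ := x₀) (ρ := ρ) y]

theorem quadraticBump_second_difference_le (x z : Euc N) :
    2 * quadraticBump x₀ ρ x - quadraticBump x₀ ρ (x + z) - quadraticBump x₀ ρ (x - z) ≤
      max 2 (2 * ρ ^ 2) * min (‖z‖ ^ 2) 1 := by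
  have hnonneg := quadraticBump_nonneg (x₀ := x₀) (ρ := ρ)
  refine le_max_mul_min_one (sq_nonneg _) ?_ ?_ (by positivity)
  · have hadd : ρ ^ 2 - ‖x + z - x₀‖ ^ 2 ≤ quadraticBump x₀ ρ (x + z) := le_max_left _ _
    have hsub : ρ ^ 2 - ‖x - z - x₀‖ ^ 2 ≤ quadraticBump x₀ ρ (x - z) := le_max_left _ _
    have hpar := parallelogram_law_with_norm ℝ (x - x₀) z
    rw [sub_add_eq_add_sub, sub_right_comm] at hpar
    have hx : quadraticBump x₀ ρ x = ρ ^ 2 - ‖x - x₀‖ ^ 2 ∨ quadraticBump x₀ ρ x = 0 :=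
      max_choice _ _
    rcases hx with hx | hx
    · linarith
    · linarith [hnonneg (x + z), hnonneg (x - z), sq_nonneg ‖z‖]
  · linarith [hnonneg (x + z), hnonneg (x - z), quadraticBump_le (x₀ := x₀) (ρ := ρ) x]

/-- A lower barrier near `x₀`: a nonnegative compactly supported function `η` with `η x₀ > 0` and
`(-Δ)^s η ≤ C` in the weak sense. -/
structure IsBarrier (N : ℕ) (s : ℝ) (x₀ : Euc N) (η : Euc N → ℝ) (C : ℝ) : Prop where
  continuous : Continuous η
  hasCompactSupport : HasCompactSupport η
  nonneg : ∀ x, 0 ≤ η x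
  pos : 0 < η x₀
  memHs : ∀ Ω, memHs N s Ω η
  integral_formDensity_le : ∀ φ : Euc N → ℝ, Integrable φ → (∀ x, 0 ≤ φ x) →
    Integrable (formDensity N s η φ) → ∫ q, formDensity N s η φ q ≤ C * ∫ x, φ x

theorem exists_isBarrier (hs : s ∈ Ioo (0 : ℝ) 1) {U : Set (Euc N)} (hU : U ∈ 𝓝 x₀) :
    ∃ η C, IsBarrier N s x₀ η C ∧ tsupport η ⊆ U := by
  obtain ⟨ρ, hρ, hρU⟩ := Metric.nhds_basis_closedBall.mem_iff.1 hU
  have hsupp := hasCompactSupport_quadraticBump (x₀ := x₀) hρ.le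
  refine ⟨quadraticBump x₀ ρ, max 2 (2 * ρ ^ 2) * ∫ z : Euc N, truncKern N s z, ?_,
    (tsupport_quadraticBump_subset hρ.le).trans hρU⟩
  exact {
    continuous := continuous_quadraticBump
    hasCompactSupport := hsupp
    nonneg := quadraticBump_nonneg
    pos := quadraticBump_self hρ
    memHs := fun Ω => memHs_of_sq_sub_le hs Ω continuous_quadraticBump hsupp
      (quadraticBump_sub_sq_le hρ.le)
    integral_formDensity_le := fun φ hφ hφ₀ hint =>
      integral_formDensity_le_of_second_difference_le hs continuous_quadraticBump
        (fun x => (Real.norm_of_nonneg (quadraticBump_nonneg x)).trans_le (quadraticBump_le x))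
        quadraticBump_second_difference_le hφ hφ₀ hint }

end QuadraticBump

/-! ### Interaction energy of functions with disjoint supports -/

section CrossDensity

variable {N : ℕ} {s : ℝ} {f φ : Euc N → ℝ}

/-- The density of the interaction energy `∬ φ(x) f(y) |x - y|^{-N-2s} dx dy`, to which the
bilinear form reduces when `f` and `φ` have disjoint supports. -/
def crossDensity (N : ℕ) (s : ℝ) (φ f : Euc N → ℝ) (q : Euc N × Euc N) : ℝ :=
  φ q.1 * f q.2 / kern N s q.1 q.2

theorem formDensity_eq_neg_crossDensity_add_swap (hdisj : ∀ x, f x * φ x = 0)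
    (q : Euc N × Euc N) :
    formDensity N s f φ q = -(crossDensity N s φ f q + crossDensity N s φ f q.swap) := by
  simp only [formDensity, crossDensity, Prod.fst_swap, Prod.snd_swap, kern_symm q.2 q.1]
  rw [← add_div, ← neg_div]
  congr 1
  linear_combination hdisj q.1 + hdisj q.2

theorem crossDensity_nonneg (hf₀ : ∀ x, 0 ≤ f x) (hφ₀ : ∀ x, 0 ≤ φ x) (q : Euc N × Euc N) :
    0 ≤ crossDensity N s φ f q :=
  div_nonneg (mul_nonneg (hφ₀ _) (hf₀ _)) (kern_nonneg _ _)

theorem integrable_crossDensity (hf : Measurable f) (hφ : Measurable φ) (hf₀ : ∀ x, 0 ≤ f x)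
    (hφ₀ : ∀ x, 0 ≤ φ x) (hdisj : ∀ x, f x * φ x = 0) (hint : Integrable (formDensity N s f φ)) :
    Integrable (crossDensity N s φ f) := by
  have hm : Measurable (crossDensity N s φ f) :=
    ((hφ.comp measurable_fst).mul (hf.comp measurable_snd)).div measurable_kern
  refine hint.mono hm.aestronglyMeasurable (ae_of_all _ fun q => ?_)
  have hq := crossDensity_nonneg (s := s) hf₀ hφ₀ q
  have hq' := crossDensity_nonneg (s := s) hf₀ hφ₀ q.swap
  rw [formDensity_eq_neg_crossDensity_add_swap hdisj, norm_neg, Real.norm_of_nonneg hq,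
    Real.norm_of_nonneg (add_nonneg hq hq')]
  exact le_add_of_nonneg_right hq'

theorem integral_formDensity_eq_neg_two_mul (hdisj : ∀ x, f x * φ x = 0)
    (hint : Integrable (crossDensity N s φ f)) :
    ∫ q, formDensity N s f φ q = -2 * ∫ q, crossDensity N s φ f q := by
  simp only [formDensity_eq_neg_crossDensity_add_swap hdisj]
  have hswap : ∫ q : Euc N × Euc N, crossDensity N s φ f q.swap = ∫ q, crossDensity N s φ f q :=
    integral_prod_swap _
  have hadd := integral_add hint hint.swap
  simp only [Function.comp_apply] at hadd
  rw [integral_neg, hadd, hswap]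
  ring

end CrossDensity

/-! ### Comparison with a barrier -/

section Comparison

variable {N : ℕ} {s : ℝ} {Ω : Set (Euc N)} {p : Euc N} {u v w : Euc N → ℝ}

theorem memHs.posPart (hu : memHs N s Ω u) : memHs N s Ω fun x => (u x)⁺ :=
  hu.of_abs_le hu (hu.1.sup_const 0)
    (fun _ => (abs_of_nonneg (posPart_nonneg _)).trans_le
      ((sup_le (le_abs_self _) (abs_nonneg _)).trans (le_add_of_nonneg_right (abs_nonneg _))))
    fun _ _ => (abs_sup_sub_sup_le_abs _ _ _).trans (le_add_of_nonneg_right (abs_nonneg _))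

theorem memHs.negPart (hu : memHs N s Ω u) : memHs N s Ω fun x => (u x)⁻ := by
  simpa only [neg_one_mul, posPart_neg] using (hu.const_mul (-1)).posPart

/-- The amount `(w - v⁺)⁺` by which the barrier `w` exceeds `v⁺`, used as a test function. -/
def barrierTest (w v : Euc N → ℝ) (x : Euc N) : ℝ := (w x - (v x)⁺)⁺

/-- The amount `(w - v⁺)⁻` by which `v⁺` exceeds the barrier `w`. -/
def barrierExcess (w v : Euc N → ℝ) (x : Euc N) : ℝ := (w x - (v x)⁺)⁻

theorem barrierTest_nonneg (x : Euc N) : 0 ≤ barrierTest w v x := posPart_nonneg _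

theorem barrierExcess_nonneg (x : Euc N) : 0 ≤ barrierExcess w v x := negPart_nonneg _

theorem continuous_barrierTest (hw : Continuous w) (hv : Continuous v) :
    Continuous (barrierTest w v) :=
  (hw.sub (hv.sup continuous_const)).sup continuous_const

theorem barrierTest_eq_zero {x : Euc N} (hx : w x = 0) : barrierTest w v x = 0 := by
  rw [barrierTest, posPart_eq_zero, hx, zero_sub]
  exact neg_nonpos.2 (posPart_nonneg _)

theorem hasCompactSupport_barrierTest (hw : HasCompactSupport w) :
    HasCompactSupport (barrierTest w v) :=
  hw.mono fun _ hx hw => hx (barrierTest_eq_zero hw)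

theorem barrierExcess_mul_barrierTest (x : Euc N) :
    barrierExcess w v x * barrierTest w v x = 0 := by
  rcases le_total (w x - (v x)⁺) 0 with hle | hge
  · exact mul_eq_zero_of_right _ (posPart_eq_zero.2 hle)
  · exact mul_eq_zero_of_left (negPart_eq_zero.2 hge) _

theorem memHs.barrierTest (hw : memHs N s Ω w) (hv : memHs N s Ω v) :
    memHs N s Ω (barrierTest w v) :=
  (hw.sub hv.posPart).posPart

theorem memHs.barrierExcess (hw : memHs N s Ω w) (hv : memHs N s Ω v) :
    memHs N s Ω (barrierExcess w v) :=
  (hw.sub hv.posPart).negPart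

theorem eq_sub_barrierTest_add_barrierExcess_sub_negPart (x : Euc N) :
    v x = w x - barrierTest w v x + barrierExcess w v x - (v x)⁻ := by
  have h₁ := posPart_sub_negPart (w x - (v x)⁺)
  have h₂ := posPart_sub_negPart (v x)
  rw [barrierTest, barrierExcess]
  linarith

theorem formDensity_barrierTest :
    formDensity N s v (barrierTest w v) =
      formDensity N s w (barrierTest w v)
        - formDensity N s (barrierTest w v) (barrierTest w v)
        + formDensity N s (barrierExcess w v) (barrierTest w v)
        - formDensity N s (fun x => (v x)⁻) (barrierTest w v) := by
  ext q
  have h₁ := eq_sub_barrierTest_add_barrierExcess_sub_negPart (w := w) (v := v) q.1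
  have h₂ := eq_sub_barrierTest_add_barrierExcess_sub_negPart (w := w) (v := v) q.2
  simp only [Pi.add_apply, Pi.sub_apply, formDensity]
  rw [← sub_div, ← add_div, ← sub_div]
  congr 1
  linear_combination (barrierTest w v q.1 - barrierTest w v q.2) * (h₁ - h₂)

theorem bform_barrierTest_le (hw : memHs N s Ω w) (hv : memHs N s Ω v)
    (hwΩ : ∀ x ∉ Ω, w x = 0) (hsign : ∀ x, w x ≠ 0 → 0 ≤ v x) :
    Integrable (crossDensity N s (barrierTest w v) fun x => (v x)⁻) ∧
    Integrable (crossDensity N s (barrierTest w v) (barrierExcess w v)) ∧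
    bform N s Ω v (barrierTest w v) ≤ (∫ q, formDensity N s w (barrierTest w v) q) +
      2 * ((∫ q, crossDensity N s (barrierTest w v) (fun x => (v x)⁻) q)
        - ∫ q, crossDensity N s (barrierTest w v) (barrierExcess w v) q) := by
  set φ := barrierTest w v
  set h := barrierExcess w v
  have hφ : memHs N s Ω φ := hw.barrierTest hv
  have hh : memHs N s Ω h := hw.barrierExcess hv
  have hφΩ : ∀ x ∉ Ω, φ x = 0 := fun x hx => barrierTest_eq_zero (hwΩ x hx)
  have hdisj (x : Euc N) : (v x)⁻ * φ x = 0 := by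
    by_cases hx : w x = 0
    · exact mul_eq_zero_of_right _ (barrierTest_eq_zero hx)
    · exact mul_eq_zero_of_left (negPart_eq_zero.2 (hsign x hx)) _
  have hwφ := hw.integrable_formDensity hφ hφΩ
  have hφφ := hφ.integrable_formDensity hφ hφΩ
  have hhφ := hh.integrable_formDensity hφ hφΩ
  have hvφ := hv.negPart.integrable_formDensity hφ hφΩ
  have hcross_v := integrable_crossDensity hv.negPart.1 hφ.1 (fun _ => negPart_nonneg _)
    barrierTest_nonneg hdisj hvφ
  have hcross_h := integrable_crossDensity hh.1 hφ.1 barrierExcess_nonneg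
    barrierTest_nonneg barrierExcess_mul_barrierTest hhφ
  refine ⟨hcross_v, hcross_h, ?_⟩
  have hself : 0 ≤ ∫ q, formDensity N s φ φ q := integral_nonneg (formDensity_self_nonneg φ)
  rw [bform_eq_integral_formDensity hφΩ, formDensity_barrierTest,
    integral_sub' ((hwφ.sub hφφ).add hhφ) hvφ, integral_add' (hwφ.sub hφφ) hhφ,
    integral_sub' hwφ hφφ, integral_formDensity_eq_neg_two_mul hdisj hcross_v,
    integral_formDensity_eq_neg_two_mul barrierExcess_mul_barrierTest hcross_h]
  linarith

end Comparison

/-! ### Antisymmetric functions -/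

section Antisymmetric

variable {N : ℕ} {s : ℝ} {Ω : Set (Euc N)} {p : Euc N} {v w : Euc N → ℝ}

theorem mem_posHalfSpace_of_pos (hp : ‖p‖ = 1) (hanti : ∀ x, v (reflect N p x) = -v x)
    (hnonneg : ∀ x ∈ posHalfSpace p, 0 ≤ v x) {x : Euc N} (hx : 0 < v x) :
    x ∈ posHalfSpace p := by
  by_contra hxp
  rcases (not_lt.1 (show ¬0 < ⟪x, p⟫ from hxp)).lt_or_eq with hneg | hzero
  · have hmem : 0 < ⟪reflect N p x, p⟫ := by
      rw [inner_reflect hp]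
      exact neg_pos.2 hneg
    linarith [hnonneg _ hmem, hanti x]
  · have hfix : reflect N p x = x := by simp only [reflect, hzero, mul_zero, zero_smul, sub_zero]
    linarith [hfix ▸ hanti x]

theorem measurePreserving_prodMap_id_reflect (hp : ‖p‖ = 1) :
    MeasurePreserving (Prod.map id (reflect N p)) (volume : Measure (Euc N × Euc N)) volume := by
  rw [reflect_eq_reflection hp]
  exact (MeasurePreserving.id _).prod (LinearIsometryEquiv.measurePreserving _)

theorem measurableEmbedding_prodMap_id_reflect (hp : ‖p‖ = 1) :
    MeasurableEmbedding (Prod.map (id : Euc N → Euc N) (reflect N p)) := by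
  rw [reflect_eq_reflection hp]
  exact ((Homeomorph.refl (Euc N)).prodCongr
    (LinearIsometryEquiv.toHomeomorph (ℝ ∙ p)ᗮ.reflection)).measurableEmbedding

theorem bform_barrierTest_le_of_antisymmetric (hp : ‖p‖ = 1) (hw : memHs N s Ω w)
    (hv : memHs N s Ω v) (hwΩ : ∀ x ∉ Ω, w x = 0) (hsign : ∀ x, w x ≠ 0 → 0 ≤ v x)
    (hanti : ∀ x, v (reflect N p x) = -v x) (hφ : Integrable (barrierTest w v)) {c : Euc N → ℝ}
    (hc : Integrable c) (hle : ∀ x y, barrierTest w v x *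
      ((v y)⁺ / kern N s x (reflect N p y) - barrierExcess w v y / kern N s x y) ≤
        barrierTest w v x * c y) :
    bform N s Ω v (barrierTest w v) ≤ (∫ q, formDensity N s w (barrierTest w v) q) +
      2 * ((∫ x, barrierTest w v x) * ∫ y, c y) := by
  obtain ⟨hint_v, hint_h, hbform⟩ := bform_barrierTest_le hw hv hwΩ hsign
  have hσ := measurePreserving_prodMap_id_reflect hp
  have hσ' := measurableEmbedding_prodMap_id_reflect hp
  have hint_v' : Integrable fun q : Euc N × Euc N =>
      crossDensity N s (barrierTest w v) (fun x => (v x)⁻) (Prod.map id (reflect N p) q) :=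
    (hσ.integrable_comp_emb hσ').2 hint_v
  refine hbform.trans (add_le_add_right (mul_le_mul_of_nonneg_left ?_ zero_le_two) _)
  rw [← hσ.integral_comp hσ', ← integral_prod_mul, ← integral_sub hint_v' hint_h]
  refine integral_mono (hint_v'.sub hint_h) (hφ.mul_prod hc)
    fun q => le_of_eq_of_le ?_ (hle q.1 q.2)
  simp only [crossDensity, Prod.map_fst, Prod.map_snd, id_eq, hanti, negPart_neg]
  ring

theorem exists_div_kern_reflect_le (hs : 0 < s) (hp : ‖p‖ = 1) {η : Euc N → ℝ}
    (hη : Continuous η) {S : Set (Euc N)} (hS : IsCompact S) (hSp : S ⊆ posHalfSpace p) :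
    ∃ A, ∀ x ∈ S, ∀ y ∈ S, η y / kern N s x (reflect N p y) ≤ A := by
  have hpos : ∀ q ∈ S ×ˢ S, kern N s q.1 (reflect N p q.2) ≠ 0 := fun q hq =>
    ((kern_nonneg _ _).trans_lt (kern_lt_kern_reflect hs hp (hSp hq.1) (hSp hq.2))).ne'
  have hcont : ContinuousOn (fun q : Euc N × Euc N => η q.2 / kern N s q.1 (reflect N p q.2))
      (S ×ˢ S) :=
    (hη.comp continuous_snd).continuousOn.div ((continuous_kern hs).comp
      (continuous_fst.prodMk ((continuous_reflect hp).comp continuous_snd))).continuousOn hpos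
  obtain ⟨A, hA⟩ := (hS.prod hS).exists_bound_of_continuousOn hcont
  exact ⟨A, fun x hx y hy => (Real.le_norm_self _).trans (hA (x, y) ⟨hx, hy⟩)⟩

theorem exists_pos_le_inv_kern_sub_inv_kern_reflect (hs : 0 < s) (hp : ‖p‖ = 1)
    {S D : Set (Euc N)} (hS : IsCompact S) (hD : IsCompact D) (hSp : S ⊆ posHalfSpace p)
    (hDp : D ⊆ posHalfSpace p) (hSD : Disjoint S D) :
    ∃ κ, 0 < κ ∧ ∀ x ∈ S, ∀ y ∈ D, κ ≤ (kern N s x y)⁻¹ - (kern N s x (reflect N p y))⁻¹ := by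
  have hpos : ∀ q ∈ S ×ˢ D, 0 < kern N s q.1 q.2 := fun q hq => kern_pos (hSD.ne_of_mem hq.1 hq.2)
  have hlt : ∀ q ∈ S ×ˢ D, kern N s q.1 q.2 < kern N s q.1 (reflect N p q.2) := fun q hq =>
    kern_lt_kern_reflect hs hp (hSp hq.1) (hDp hq.2)
  have hcont : ContinuousOn (fun q : Euc N × Euc N =>
      (kern N s q.1 q.2)⁻¹ - (kern N s q.1 (reflect N p q.2))⁻¹) (S ×ˢ D) :=
    ((continuous_kern hs).continuousOn.inv₀ fun q hq => (hpos q hq).ne').sub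
      (((continuous_kern hs).comp (continuous_fst.prodMk
        ((continuous_reflect hp).comp continuous_snd))).continuousOn.inv₀
          fun q hq => ((hpos q hq).trans (hlt q hq)).ne')
  obtain ⟨κ, hκ, hle⟩ := (hS.prod hD).exists_forall_le' hcont fun q hq =>
    sub_pos.2 (inv_strictAnti₀ (hpos q hq) (hlt q hq))
  exact ⟨κ, hκ, fun x hx y hy => hle (x, y) ⟨hx, hy⟩⟩

theorem indicator_le_barrierExcess_mul (hs : 0 < s) (hp : ‖p‖ = 1)
    (hpos : ∀ y, 0 < v y → y ∈ posHalfSpace p) {D : Set (Euc N)} {δ κ : ℝ} (hκ : 0 ≤ κ)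
    (hD : ∀ y ∈ D, δ < v y ∧ w y = 0) {x : Euc N} (hx : x ∈ posHalfSpace p) (hw₀ : ∀ y, 0 ≤ w y)
    (hxw : barrierExcess w v x = 0)
    (hgap : ∀ y ∈ D, κ ≤ (kern N s x y)⁻¹ - (kern N s x (reflect N p y))⁻¹) (y : Euc N) :
    D.indicator (fun _ => δ * κ) y ≤
      barrierExcess w v y * ((kern N s x y)⁻¹ - (kern N s x (reflect N p y))⁻¹) := by
  have hexcess : (v y)⁺ - w y ≤ barrierExcess w v y :=
    (neg_sub _ _).symm.trans_le (neg_le_negPart _)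
  by_cases hy : y ∈ D
  · obtain ⟨hvy, hwy⟩ := hD y hy
    rw [indicator_of_mem hy]
    refine mul_le_mul ?_ (hgap y hy) hκ (barrierExcess_nonneg y)
    linarith [le_posPart (v y)]
  · rw [indicator_of_notMem hy]
    rcases (barrierExcess_nonneg (w := w) (v := v) y).eq_or_lt' with hzero | hlt
    · rw [hzero, zero_mul]
    · have hvy : 0 < v y := posPart_pos_iff.1
        ((hw₀ y).trans_lt (sub_neg.1 (negPart_pos_iff.1 hlt)))
      have hxy : x ≠ y := fun h => hlt.ne' (h ▸ hxw)
      exact mul_nonneg hlt.le (sub_nonneg.2 (inv_anti₀ (kern_pos hxy)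
        (kern_lt_kern_reflect hs hp hx (hpos y hvy)).le))

theorem posPart_div_kern_reflect_sub_le (x y : Euc N) :
    (v y)⁺ / kern N s x (reflect N p y) - barrierExcess w v y / kern N s x y ≤
      w y / kern N s x (reflect N p y) -
        barrierExcess w v y * ((kern N s x y)⁻¹ - (kern N s x (reflect N p y))⁻¹) := by
  have hle : (v y)⁺ ≤ w y + barrierExcess w v y :=
    sub_le_iff_le_add'.1 ((neg_sub _ _).symm.trans_le (neg_le_negPart _))
  have := div_le_div_of_nonneg_right hle (kern_nonneg (s := s) x (reflect N p y))
  rw [add_div] at this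
  simp only [div_eq_mul_inv, mul_sub] at this ⊢
  linarith

theorem barrierTest_mul_le (hs : 0 < s) (hp : ‖p‖ = 1)
    (hpos : ∀ y, 0 < v y → y ∈ posHalfSpace p) (hw₀ : ∀ y, 0 ≤ w y) {S D : Set (Euc N)}
    (hSp : S ⊆ posHalfSpace p) (hwS : ∀ y ∉ S, w y = 0) {δ κ a : ℝ} (hκ : 0 ≤ κ)
    (hvD : ∀ y ∈ D, δ < v y) (hSD : Disjoint S D)
    (ha : ∀ x ∈ S, ∀ y ∈ S, w y / kern N s x (reflect N p y) ≤ a)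
    (hgap : ∀ x ∈ S, ∀ y ∈ D, κ ≤ (kern N s x y)⁻¹ - (kern N s x (reflect N p y))⁻¹)
    (x y : Euc N) :
    barrierTest w v x *
        ((v y)⁺ / kern N s x (reflect N p y) - barrierExcess w v y / kern N s x y) ≤
      barrierTest w v x * (S.indicator (fun _ => a) y - D.indicator (fun _ => δ * κ) y) := by
  by_cases hx : barrierTest w v x = 0
  · simp only [hx, zero_mul, le_refl]
  have hxS : x ∈ S := by_contra fun h => hx (barrierTest_eq_zero (hwS x h))
  refine mul_le_mul_of_nonneg_left ((posPart_div_kern_reflect_sub_le x y).trans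
    (sub_le_sub ?_ ?_)) (barrierTest_nonneg x)
  · by_cases hy : y ∈ S
    · simpa only [indicator_of_mem hy] using ha x hxS y hy
    · rw [indicator_of_notMem hy, hwS y hy, zero_div]
  · exact indicator_le_barrierExcess_mul hs hp hpos hκ
      (fun y hy => ⟨hvD y hy, hwS y (hSD.notMem_of_mem_right hy)⟩) (hSp hxS) hw₀
      ((mul_eq_zero.1 (barrierExcess_mul_barrierTest x)).resolve_right hx) (hgap x hxS) y

theorem integral_indicator_sub_indicator {S D : Set (Euc N)} (hS : IsCompact S)
    (hD : IsCompact D) (a b : ℝ) :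
    Integrable (fun y => S.indicator (fun _ => a) y - D.indicator (fun _ => b) y) ∧
      ∫ y, (S.indicator (fun _ => a) y - D.indicator (fun _ => b) y) =
        a * volume.real S - b * volume.real D := by
  have hint {K : Set (Euc N)} (hK : IsCompact K) (c : ℝ) : Integrable (K.indicator fun _ => c) :=
    (integrable_indicator_iff hK.measurableSet).2 (integrableOn_const hK.measure_ne_top)
  refine ⟨(hint hS a).sub (hint hD b), ?_⟩
  rw [integral_sub (hint hS a) (hint hD b), integral_indicator_const _ hS.measurableSet,
    integral_indicator_const _ hD.measurableSet, smul_eq_mul, smul_eq_mul, mul_comm a, mul_comm b]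

theorem bform_barrierTest_le_mul_integral {η : Euc N → ℝ} {x₀ : Euc N} {C : ℝ}
    (hη : IsBarrier N s x₀ η C) (hs : 0 < s) (hp : ‖p‖ = 1) (hc : Continuous v)
    (hv : memHs N s Ω v) (hanti : ∀ x, v (reflect N p x) = -v x)
    (hnonneg : ∀ x ∈ posHalfSpace p, 0 ≤ v x) (hηΩ : tsupport η ⊆ Ω ∩ posHalfSpace p)
    {D : Set (Euc N)} (hD : IsCompact D) (hηD : Disjoint (tsupport η) D) {δ κ A ε : ℝ}
    (hvD : ∀ y ∈ D, δ < v y) (hκ : 0 ≤ κ) (hε : 0 ≤ ε)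
    (hA : ∀ x ∈ tsupport η, ∀ y ∈ tsupport η, η y / kern N s x (reflect N p y) ≤ A)
    (hgap : ∀ x ∈ tsupport η, ∀ y ∈ D,
      κ ≤ (kern N s x y)⁻¹ - (kern N s x (reflect N p y))⁻¹) :
    bform N s Ω v (barrierTest (fun x => ε * η x) v) ≤
      (ε * (C + 2 * A * volume.real (tsupport η)) - 2 * (δ * κ) * volume.real D) *
        ∫ x, barrierTest (fun x => ε * η x) v x := by
  set w : Euc N → ℝ := fun x => ε * η x with hw_def
  have hw : memHs N s Ω w := (hη.memHs Ω).const_mul ε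
  have hwS {x : Euc N} (hx : x ∉ tsupport η) : w x = 0 :=
    mul_eq_zero_of_right _ (image_eq_zero_of_notMem_tsupport hx)
  have hsign (x : Euc N) (hx : w x ≠ 0) : 0 ≤ v x :=
    hnonneg x (hηΩ (not_imp_comm.1 hwS hx)).2
  have hφ : Integrable (barrierTest w v) :=
    (continuous_barrierTest (hη.continuous.const_mul ε) hc).integrable_of_hasCompactSupport
      (hasCompactSupport_barrierTest hη.hasCompactSupport.mul_left)
  have hwΩ (x : Euc N) (hx : x ∉ Ω) : w x = 0 := hwS fun h => hx (hηΩ h).1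
  obtain ⟨hint, hintegral⟩ :=
    integral_indicator_sub_indicator hη.hasCompactSupport hD (ε * A) (δ * κ)
  have hform : ∫ q, formDensity N s w (barrierTest w v) q ≤
      ε * (C * ∫ x, barrierTest w v x) := by
    simp only [hw_def, formDensity_const_mul_left, integral_const_mul]
    refine mul_le_mul_of_nonneg_left (hη.integral_formDensity_le _ hφ barrierTest_nonneg ?_) hε
    exact (hη.memHs Ω).integrable_formDensity (hw.barrierTest hv)
      fun x hx => barrierTest_eq_zero (hwΩ x hx)
  refine (bform_barrierTest_le_of_antisymmetric hp hw hv hwΩ hsign hanti hφ hint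
    (barrierTest_mul_le hs hp (fun y hy => mem_posHalfSpace_of_pos hp hanti hnonneg hy)
      (fun y => mul_nonneg hε (hη.nonneg y)) (fun x hx => (hηΩ hx).2) (fun x hx => hwS hx) hκ hvD
      hηD (fun x hx y hy => ?_) hgap)).trans ?_
  · rw [mul_div_assoc]
    exact mul_le_mul_of_nonneg_left (hA x hx y hy) hε
  · rw [hintegral]
    linarith

/-- If `v x = 0`, test with the part `φ = (ε η - v⁺)⁺` of a barrier `ε η` around `x` lying above
`v⁺`. All other contributions are at most `O(ε) ∫ φ`, but a set `D` where `v` is bounded below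
contributes `-c ∫ φ` with `c > 0` independent of `ε`, because `|x - y| < |x - σ y|` for `y ∈ D`. -/
theorem pos_of_antisymmetric_supersolution (hs : s ∈ Ioo (0 : ℝ) 1) (hΩ : IsOpen Ω)
    (hp : ‖p‖ = 1) (hc : Continuous v) (hv : memHs N s Ω v)
    (hanti : ∀ x, v (reflect N p x) = -v x) (hnonneg : ∀ x ∈ posHalfSpace p, 0 ≤ v x)
    (hsuper : ∀ φ, memHs N s Ω φ → (∀ x, 0 ≤ φ x) → (∀ x ∉ Ω ∩ posHalfSpace p, φ x = 0) →
      0 ≤ bform N s Ω v φ)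
    (hne : ∃ y, 0 < v y) {x : Euc N} (hx : x ∈ Ω ∩ posHalfSpace p) : 0 < v x := by
  obtain ⟨y, hy⟩ := hne
  by_contra hvx
  replace hvx : v x = 0 := le_antisymm (not_lt.1 hvx) (hnonneg x hx.2)
  obtain ⟨D, hD, hyD, hvD⟩ := exists_compact_subset
    (isOpen_lt continuous_const hc) (show v y / 2 < v y from half_lt_self hy)
  have hxD : x ∉ D := fun h => (half_pos hy).not_ge ((hvD h).le.trans hvx.le)
  have hDp : D ⊆ posHalfSpace p := fun z hz =>
    mem_posHalfSpace_of_pos hp hanti hnonneg ((half_pos hy).trans (hvD hz))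
  have hD₀ : 0 < volume.real D :=
    ENNReal.toReal_pos (Measure.measure_pos_of_nonempty_interior volume ⟨y, hyD⟩).ne'
      hD.measure_ne_top
  obtain ⟨η, C, hη, hηU⟩ := exists_isBarrier hs
    (((hΩ.inter isOpen_posHalfSpace).sdiff hD.isClosed).mem_nhds ⟨hx, hxD⟩)
  have hηΩ : tsupport η ⊆ Ω ∩ posHalfSpace p := hηU.trans sdiff_subset
  have hηD : Disjoint (tsupport η) D := disjoint_left.2 fun z hz => (hηU hz).2
  obtain ⟨A, hA⟩ := exists_div_kern_reflect_le hs.1 hp hη.continuous hη.hasCompactSupport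
    fun z hz => (hηΩ hz).2
  obtain ⟨κ, hκ, hgap⟩ := exists_pos_le_inv_kern_sub_inv_kern_reflect hs.1 hp
    hη.hasCompactSupport hD (fun z hz => (hηΩ hz).2) hDp hηD
  obtain ⟨ε, hε, hlt⟩ := exists_pos_mul_lt
    (show 0 < 2 * (v y / 2 * κ) * volume.real D by positivity)
    (C + 2 * A * volume.real (tsupport η))
  have hφpos : 0 < ∫ x, barrierTest (fun x => ε * η x) v x := by
    refine (continuous_barrierTest (hη.continuous.const_mul ε) hc)
      |>.integral_pos_of_hasCompactSupport_nonneg_nonzero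
      (hasCompactSupport_barrierTest hη.hasCompactSupport.mul_left) barrierTest_nonneg (x := x) ?_
    rw [barrierTest, hvx, posPart_zero, sub_zero]
    exact (posPart_pos (mul_pos hε hη.pos)).ne'
  refine (hsuper _ (((hη.memHs Ω).const_mul ε).barrierTest hv) barrierTest_nonneg
    fun z hz => barrierTest_eq_zero (mul_eq_zero_of_right _
      (image_eq_zero_of_notMem_tsupport fun h => hz (hηΩ h)))).not_gt ?_
  exact (bform_barrierTest_le_mul_integral hη hs.1 hp hc hv hanti hnonneg hηΩ hD hηD
    (fun z hz => hvD hz) hκ.le hε.le hA hgap).trans_lt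
      (mul_neg_of_neg_of_pos (by linarith) hφpos)

end Antisymmetric

/-! ### Foliated Schwarz symmetry -/

section FoliatedSchwarz

variable {N : ℕ} {p : Euc N} {u : Euc N → ℝ}

theorem ne_zero_of_mem_posHalfSpace {x : Euc N} (hx : x ∈ posHalfSpace p) : x ≠ 0 := by
  rintro rfl
  exact (show 0 < ⟪(0 : Euc N), p⟫ from hx).ne' (inner_zero_left p)

theorem reflect_ne_zero (hp : ‖p‖ = 1) {x : Euc N} (hx : x ≠ 0) : reflect N p x ≠ 0 := by
  rw [← norm_ne_zero_iff, norm_reflect hp]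
  exact norm_ne_zero_iff.2 hx

theorem arccos_inner_reflect (hp : ‖p‖ = 1) (x : Euc N) :
    Real.arccos (⟪reflect N p x, p⟫ / ‖reflect N p x‖) = π - Real.arccos (⟪x, p⟫ / ‖x‖) := by
  rw [inner_reflect hp, norm_reflect hp, neg_div, Real.arccos_neg]

theorem arccos_mem_Icc (t : ℝ) : Real.arccos t ∈ Icc 0 π :=
  ⟨Real.arccos_nonneg t, Real.arccos_le_pi t⟩

theorem pi_sub_mem_Icc {θ : ℝ} (hθ : θ ∈ Icc 0 π) : π - θ ∈ Icc 0 π :=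
  ⟨sub_nonneg.2 hθ.2, sub_le_self _ hθ.1⟩

theorem FoliatedSchwarz.reflect_le (hp : ‖p‖ = 1) (hu : FoliatedSchwarz N p u) {x : Euc N}
    (hx : x ∈ posHalfSpace p) : u (reflect N p x) ≤ u x := by
  obtain ⟨uh, hanti, huh⟩ := hu
  have hx₀ := ne_zero_of_mem_posHalfSpace hx
  rw [huh _ (reflect_ne_zero hp hx₀), huh x hx₀, arccos_inner_reflect hp, norm_reflect hp]
  refine hanti _ (arccos_mem_Icc _) (pi_sub_mem_Icc (arccos_mem_Icc _)) ?_
  have hx' : 0 < ⟪x, p⟫ := hx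
  have := Real.arccos_le_pi_div_two.2 (show 0 ≤ ⟪x, p⟫ / ‖x‖ by positivity)
  linarith

theorem FoliatedSchwarz.sub_reflect (hp : ‖p‖ = 1) (hu : FoliatedSchwarz N p u) :
    FoliatedSchwarz N p fun x => u x - u (reflect N p x) := by
  obtain ⟨uh, hanti, huh⟩ := hu
  refine ⟨fun r θ => uh r θ - uh r (π - θ), fun r θ hθ θ' hθ' hle => ?_, fun x hx => ?_⟩
  · exact sub_le_sub (hanti r hθ hθ' hle)
      (hanti r (pi_sub_mem_Icc hθ') (pi_sub_mem_Icc hθ) (sub_le_sub_left hle π))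
  · beta_reduce
    rw [huh x hx, huh _ (reflect_ne_zero hp hx), arccos_inner_reflect hp, norm_reflect hp]

theorem FoliatedSchwarz.radial_of_comp_reflect_eq (hp : ‖p‖ = 1) (hu : FoliatedSchwarz N p u)
    (hsymm : ∀ x, u (reflect N p x) = u x) : Radial N u := by
  obtain ⟨uh, hanti, huh⟩ := hu
  refine ⟨fun r => u (r • p), fun x => ?_⟩
  change u x = u (‖x‖ • p)
  rcases eq_or_ne x 0 with rfl | hx
  · rw [norm_zero, zero_smul]
  have hr : 0 < ‖x‖ := norm_pos_iff.2 hx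
  have hnorm : ‖‖x‖ • p‖ = ‖x‖ := by rw [norm_smul, norm_norm, hp, mul_one]
  have hne : ‖x‖ • p ≠ 0 := norm_pos_iff.1 (hnorm.symm ▸ hr)
  have harccos : Real.arccos (⟪‖x‖ • p, p⟫ / ‖‖x‖ • p‖) = 0 := by
    rw [hnorm, real_inner_smul_left, real_inner_self_eq_norm_sq, hp, one_pow, mul_one,
      div_self hr.ne', Real.arccos_one]
  have hnorth : u (‖x‖ • p) = uh ‖x‖ 0 := by rw [huh _ hne, harccos, hnorm]
  have hsouth : u (‖x‖ • p) = uh ‖x‖ π := by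
    rw [← hsymm, huh _ (reflect_ne_zero hp hne), arccos_inner_reflect hp, norm_reflect hp, harccos,
      hnorm, sub_zero]
  have hmem := arccos_mem_Icc (⟪x, p⟫ / ‖x‖)
  refine le_antisymm ?_ ?_
  · rw [hnorth, huh x hx]
    exact hanti _ (left_mem_Icc.2 Real.pi_pos.le) hmem hmem.1
  · rw [hsouth, huh x hx]
    exact hanti _ hmem (right_mem_Icc.2 Real.pi_pos.le) hmem.2

end FoliatedSchwarz

/-! ### Nodal domains -/

section NodalDomains

variable {N : ℕ} {Ω : Set (Euc N)} {p : Euc N} {v : Euc N → ℝ}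

theorem card_connectedComponents_eq_two {X : Type*} [TopologicalSpace X] {A : Set X}
    (hA : IsClopen A) (hconn : IsConnected A) (hconn' : IsConnected Aᶜ) :
    Nat.card (ConnectedComponents X) = 2 := by
  obtain ⟨a, ha⟩ := hconn.nonempty
  obtain ⟨b, hb⟩ := hconn'.nonempty
  refine Nat.card_eq_two_iff.2 ⟨a, b, fun hab => ?_, eq_univ_of_forall fun C => ?_⟩
  · exact hb (hA.connectedComponent_subset ha
      (ConnectedComponents.coe_eq_coe'.1 hab.symm))
  · obtain ⟨x, rfl⟩ := ConnectedComponents.surjective_coe C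
    by_cases hx : x ∈ A
    · exact Or.inl (ConnectedComponents.coe_eq_coe'.2
        (hconn.isPreconnected.subset_connectedComponent ha hx))
    · exact Or.inr (ConnectedComponents.coe_eq_coe'.2
        (hconn'.isPreconnected.subset_connectedComponent hb hx))

theorem isConnected_subtypeVal_preimage {X : Type*} [TopologicalSpace X] {P : X → Prop}
    {U : Set X} (hU : IsConnected U) (hUP : ∀ x ∈ U, P x) :
    IsConnected ((↑) ⁻¹' U : Set {x // P x}) := by
  have himage : (↑) '' ((↑) ⁻¹' U : Set {x // P x}) = U :=
    image_preimage_eq_of_subset fun x hx => ⟨⟨x, hUP x hx⟩, rfl⟩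
  refine ⟨hU.nonempty.preimage' fun x hx => ⟨⟨x, hUP x hx⟩, rfl⟩, ?_⟩
  refine (Topology.IsInducing.isPreconnected_image (f := (Subtype.val : {x // P x} → X))
    Topology.IsInducing.subtypeVal).1 ?_
  exact himage.symm ▸ hU.isPreconnected

theorem twoNodal_of_isConnected {U V : Set (Euc N)} (hU : IsOpen U) (hV : IsOpen V)
    (hUV : Disjoint U V) (hUconn : IsConnected U) (hVconn : IsConnected V)
    (hnodal : ∀ x, x ∈ Ω ∧ v x ≠ 0 ↔ x ∈ U ∪ V) : TwoNodal N Ω v := by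
  have hcompl : ((↑) ⁻¹' U : Set {x // x ∈ Ω ∧ v x ≠ 0})ᶜ = (↑) ⁻¹' V := by
    ext x
    exact ⟨((hnodal x).1 x.2).resolve_left, fun hxV hxU => hUV.notMem_of_mem_left hxU hxV⟩
  refine card_connectedComponents_eq_two (A := (↑) ⁻¹' U) ⟨⟨?_⟩, ?_⟩
    (isConnected_subtypeVal_preimage hUconn fun x hx => (hnodal x).2 (Or.inl hx)) ?_
  · rw [hcompl]
    exact hV.preimage continuous_subtype_val
  · exact hU.preimage continuous_subtype_val
  · rw [hcompl]
    exact isConnected_subtypeVal_preimage hVconn fun x hx => (hnodal x).2 (Or.inr hx)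

theorem twoNodal_of_pos_iff (hp : ‖p‖ = 1) (hΩ : IsOpen Ω) (hΩp : reflect N p ⁻¹' Ω = Ω)
    (hconn : IsConnected (Ω ∩ posHalfSpace p)) (hanti : ∀ x, v (reflect N p x) = -v x)
    (hpos : ∀ x ∈ Ω, 0 < v x ↔ x ∈ posHalfSpace p) : TwoNodal N Ω v := by
  have hΩ_iff (x : Euc N) : reflect N p x ∈ Ω ↔ x ∈ Ω := Set.ext_iff.1 hΩp x
  have hU : IsOpen (Ω ∩ posHalfSpace p) := hΩ.inter isOpen_posHalfSpace
  have himage : reflect N p '' (Ω ∩ posHalfSpace p) = reflect N p ⁻¹' (Ω ∩ posHalfSpace p) :=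
    congrFun (image_eq_preimage_of_inverse (reflect_reflect hp) (reflect_reflect hp)) _
  have hpos_iff (x : Euc N) : x ∈ Ω ∩ posHalfSpace p ↔ x ∈ Ω ∧ 0 < v x :=
    and_congr_right fun hx => (hpos x hx).symm
  have hneg_iff (x : Euc N) : x ∈ reflect N p ⁻¹' (Ω ∩ posHalfSpace p) ↔ x ∈ Ω ∧ v x < 0 := by
    rw [mem_preimage, hpos_iff, hΩ_iff, hanti, neg_pos]
  refine twoNodal_of_isConnected hU (hU.preimage (continuous_reflect hp)) ?_ hconn ?_ fun x => ?_
  · exact disjoint_left.2 fun x hx hx' => ((hpos_iff x).1 hx).2.not_gt ((hneg_iff x).1 hx').2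
  · exact himage ▸ hconn.image _ (continuous_reflect hp).continuousOn
  · rw [mem_union, hpos_iff, hneg_iff, ← and_or_left, or_comm, lt_or_lt_iff_ne]

end NodalDomains

/-! ### Nodal domains of the antisymmetric part -/

section AntisymmetricPart

variable {N : ℕ} {s μ : ℝ} {Ω : Set (Euc N)} {p : Euc N} {u v : Euc N → ℝ}

theorem setIntegral_eq_zero_of_antisymmetric (hp : ‖p‖ = 1) (hΩp : reflect N p ⁻¹' Ω = Ω)
    (hanti : ∀ x, v (reflect N p x) = -v x) : ∫ x in Ω, v x = 0 := by
  rw [reflect_eq_reflection hp] at hΩp hanti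
  have hreflect := setIntegral_comp_isometry hΩp v
  simp only [hanti, integral_neg] at hreflect
  linarith

theorem IsNeumannSolution.sub_reflect (hp : ‖p‖ = 1) (hΩp : reflect N p ⁻¹' Ω = Ω)
    (hu : IsNeumannSolution N s Ω μ u) :
    IsNeumannSolution N s Ω μ fun x => u x - u (reflect N p x) := by
  rw [reflect_eq_reflection hp] at hΩp ⊢
  exact hu.sub (hu.comp_isometry hΩp)

theorem IsNeumannSolution.bform_nonneg (hs : s ∈ Ioo (0 : ℝ) 1) (hμ : 0 ≤ μ)
    (hv : IsNeumannSolution N s Ω μ v) {φ : Euc N → ℝ} (hφ : memHs N s Ω φ)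
    (hvφ : ∀ x, 0 ≤ v x * φ x) : 0 ≤ bform N s Ω v φ := by
  refine nonneg_of_mul_nonneg_right ?_ (half_pos (cNs_pos (N := N) hs))
  rw [hv.2 φ hφ]
  exact mul_nonneg hμ (integral_nonneg hvφ)

theorem IsNeumannSolution.twoNodal_of_antisymmetric (hs : s ∈ Ioo (0 : ℝ) 1) (hp : ‖p‖ = 1)
    (hΩ : IsOpen Ω) (hΩp : reflect N p ⁻¹' Ω = Ω) (hconn : IsConnected (Ω ∩ posHalfSpace p))
    (hv : IsNeumannSolution N s Ω μ v) (hc : Continuous v)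
    (hanti : ∀ x, v (reflect N p x) = -v x) (hnonneg : ∀ x ∈ posHalfSpace p, 0 ≤ v x)
    (hnontriv : ¬ v =ᵐ[volume.restrict Ω] 0) : TwoNodal N Ω v := by
  have hne : ∃ y, 0 < v y := by
    obtain ⟨y, hy⟩ : ∃ y, v y ≠ 0 := by
      by_contra! hzero
      exact hnontriv (ae_of_all _ hzero)
    rcases hy.lt_or_gt with hneg | hpos
    · exact ⟨reflect N p y, by rwa [hanti, neg_pos]⟩
    · exact ⟨y, hpos⟩
  refine twoNodal_of_pos_iff hp hΩ hΩp hconn hanti fun x hx =>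
    ⟨mem_posHalfSpace_of_pos hp hanti hnonneg, fun hxp => ?_⟩
  refine pos_of_antisymmetric_supersolution hs hΩ hp hc hv.1 hanti hnonneg
    (fun φ hφ hφ₀ hφsupp => ?_) hne ⟨hx, hxp⟩
  refine hv.bform_nonneg hs (hv.eigenvalue_nonneg hs hnontriv) hφ fun z => ?_
  by_cases hz : z ∈ Ω ∩ posHalfSpace p
  · exact mul_nonneg (hnonneg z hz.2) (hφ₀ z)
  · rw [hφsupp z hz, mul_zero]

/-- Nontrivial mean-zero solutions of the Neumann eigenvalue problem with any eigenvalue `μ`;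
`IsFirstEigen N s Ω` is the case `μ = mu1 N s Ω`. -/
def IsMeanZeroEigenfunction (N : ℕ) (s : ℝ) (Ω : Set (Euc N)) (μ : ℝ) (u : Euc N → ℝ) : Prop :=
  memHs N s Ω u ∧ ¬ u =ᵐ[volume.restrict Ω] 0 ∧ ∫ x in Ω, u x = 0 ∧
    ∀ v, memHs N s Ω v → cNs N s / 2 * bform N s Ω u v = μ * ∫ x in Ω, u x * v x

theorem statement16_general (hs : s ∈ Ioo (0 : ℝ) 1) (hp : ‖p‖ = 1) (hΩ : IsOpen Ω)
    (hΩp : reflect N p ⁻¹' Ω = Ω) (hconn : IsConnected (Ω ∩ posHalfSpace p))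
    (hu : IsNeumannSolution N s Ω μ u) (hc : Continuous u) (hnonrad : ¬ Radial N u)
    (hfs : FoliatedSchwarz N p u) (hv : v = fun x => u x - u (reflect N p x)) :
    IsMeanZeroEigenfunction N s Ω μ v ∧ (∀ x, v (reflect N p x) = -v x) ∧
      FoliatedSchwarz N p v ∧ TwoNodal N Ω v := by
  have hvsol : IsNeumannSolution N s Ω μ v := hv ▸ hu.sub_reflect hp hΩp
  have hvc : Continuous v := hv ▸ hc.sub (hc.comp (continuous_reflect hp))
  have hanti (x : Euc N) : v (reflect N p x) = -v x := by
    simp only [hv, reflect_reflect hp, neg_sub]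
  have hnonneg (x : Euc N) (hx : x ∈ posHalfSpace p) : 0 ≤ v x := by
    simpa only [hv, sub_nonneg] using hfs.reflect_le hp hx
  have hnontriv : ¬ v =ᵐ[volume.restrict Ω] 0 := by
    intro hzero
    have hv₀ := hvsol.eq_zero_of_ae_eq_zero hs hΩ (hconn.nonempty.mono inter_subset_left) hvc hzero
    exact hnonrad (hfs.radial_of_comp_reflect_eq hp fun x => by
      simpa only [hv, sub_eq_zero, eq_comm] using hv₀ x)
  exact ⟨⟨hvsol.1, hnontriv, setIntegral_eq_zero_of_antisymmetric hp hΩp hanti, hvsol.2⟩,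
    hanti, hv ▸ hfs.sub_reflect hp,
    hvsol.twoNodal_of_antisymmetric hs hp hΩ hΩp hconn hvc hanti hnonneg hnontriv⟩

end AntisymmetricPart

/-- Proposition 4.5: if a continuous first nontrivial eigenfunction `u` in a
ball is nonradial and foliated Schwarz symmetric w.r.t. `p`, then `u - u∘σ_p` is a first
nontrivial eigenfunction, antisymmetric w.r.t. `{x·p = 0}`, foliated Schwarz symmetric w.r.t.
`p`, with exactly two nodal domains in `B`. -/
theorem statement16 (N : ℕ) (hN : 2 ≤ N) (s : ℝ) (hs : s ∈ Set.Ioo (0 : ℝ) 1)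
    (R : ℝ) (hR : 0 < R) (B : Set (Euc N)) (hB : B = Metric.ball (0 : Euc N) R)
    (u : Euc N → ℝ) (hu : IsFirstEigen N s B u) (hc : Continuous u)
    (hnonrad : ¬ Radial N u)
    (p : Euc N) (hp : ‖p‖ = 1) (hfs : FoliatedSchwarz N p u) :
    IsFirstEigen N s B (fun x => u x - u (reflect N p x)) ∧
    (∀ x : Euc N,
      u (reflect N p x) - u (reflect N p (reflect N p x)) = -(u x - u (reflect N p x))) ∧
    FoliatedSchwarz N p (fun x => u x - u (reflect N p x)) ∧
    TwoNodal N B (fun x => u x - u (reflect N p x)) := by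
  subst hB
  exact statement16_general hs hp Metric.isOpen_ball (reflect_preimage_ball hp R)
    (isConnected_ball_inter_posHalfSpace hp hR) ⟨hu.1, hu.2.2.2⟩ hc hnonrad hfs rfl

end FracNeumann
end
end
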